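/- Assume (p_0, e) ≠ (2, 0) and that there exists a maximal abelian subgroup A_R of H_R contained in F_q × F_q. Then #{(x,y) ∈ F_{q^{4p_0}} × F_{q^{4p_0}} : y^p − y = x·R(x)} = q^{4p_0} − (p−1)·p^e·q^{2p_0}. (Equivalently, the smooth compactification of the affine curve y^p − y = xR(x), which has genus p^e(p−1)/2 and a single point at infinity, is F_{q^{4p_0}}-minimal; in particular it is supersingular.) -/

import Mathlib

open Finset Polynomial

/-- The additive polynomial `R(x) = ∑_{i=0}^e a_i x^{p^i}`, evaluated in any commutative ring. -/
def Rgen {A : Type*} [CommRing A] (p e : ℕ) (a : ℕ → A) (x : A) : A :=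
  ∑ i ∈ Finset.range (e + 1), a i * x ^ p ^ i

/-- `E_R(x) = R(x)^{p^e} + ∑_{i=0}^e (a_i x)^{p^{e-i}}`. -/
def Egen {A : Type*} [CommRing A] (p e : ℕ) (a : ℕ → A) (x : A) : A :=
  Rgen p e a x ^ p ^ e + ∑ i ∈ Finset.range (e + 1), (a i * x) ^ p ^ (e - i)

/-- `f_R(x,y) = -∑_{i=0}^{e-1} ( ∑_{j=0}^{e-i-1} (a_i x^{p^i} y)^{p^j} + (x R(y))^{p^i} )`. -/
def fgen {A : Type*} [CommRing A] (p e : ℕ) (a : ℕ → A) (x y : A) : A :=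
  -∑ i ∈ Finset.range e,
    ((∑ j ∈ Finset.range (e - i), (a i * x ^ p ^ i * y) ^ p ^ j) + (x * Rgen p e a y) ^ p ^ i)

/-- The set `H_R = {(a,b) : E_R(a) = 0, b^p - b = a R(a)}`. -/
def Hset {K : Type*} [CommRing K] (p e : ℕ) (a : ℕ → K) : Set (K × K) :=
  {h | Egen p e a h.1 = 0 ∧ h.2 ^ p - h.2 = h.1 * Rgen p e a h.1}

/-- The group law `(a,b)·(a',b') = (a+a', b+b'+f_R(a,a'))` on `H_R`. -/
def Hmul {K : Type*} [CommRing K] (p e : ℕ) (a : ℕ → K) (h h' : K × K) : K × K :=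
  (h.1 + h'.1, h.2 + h'.2 + fgen p e a h.1 h'.1)

/-! Expanding over the additive characters of `F_p` turns the count into
`q ^ (4 * p₀) + (p - 1) * S`, where `S` is the sum of `ψ (x * R x)` over `F_{q^{4p₀}}` for a
nontrivial character `ψ` invariant under `z ↦ z ^ p`; every such sum equals
`-p ^ e * q ^ (2 * p₀)`, for the following reasons.

The identity `f_R(x, y) ^ p - f_R(x, y) = x * R y + y * R x - x ^ p ^ e * E_R(y)` shows that the
commutator pairing `f_R(x, y) - f_R(y, x)` on `V_R` takes values in `F_p`. It is nondegenerate, so a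
maximal abelian subgroup projects onto a Lagrangian subspace `W`, of order `p ^ e`.

In odd characteristic, let `F` be the monic additive polynomial with zero set `W`. The form `f_R` is
symmetric on `W`, and interpolating it on `W` gives a symmetric form `Φ` with
`x * R y + y * R x = γ * F x * F y + (Φ x y ^ p - Φ x y)`. As `W` is fixed by the Frobenius of
`F_q`, the image of `F` contains the kernel of the trace to `F_q`, which forces `S` to be `p ^ e`
times a full quadratic Gauss sum. The latter is `-Q` for `Q = q ^ (2 * p₀)`, because the field has
order `Q ^ 2` and `Q ≡ 1 mod 4`.

In characteristic two, let `φ` be the Frobenius of `F_q`. It fixes `W` pointwise, so `φ - 1` maps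
`V_R` into the orthogonal complement of `W`, which is `W` itself; hence `φ ^ 2 = 1` on `V_R`.
Therefore `ψ (v * R v) = 1` for all `v` in `V_R`, so that `S ^ 2 = (p ^ e * q ^ 4) ^ 2`. A positive
sign would give `x ↦ f_R(x, x)` more zeros on `V_R` than its degree permits.
-/

/-- `q` is a positive power of the (prime) characteristic of `A`, so that `x ↦ x ^ q` is an
iterate of the Frobenius endomorphism of `A`. -/
def IsCharPower (q : ℕ) (A : Type*) [CommRing A] : Prop :=
  ∃ p n : ℕ, p.Prime ∧ n ≠ 0 ∧ CharP A p ∧ q = p ^ n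

namespace IsCharPower

section CommRing

variable {A B : Type*} [CommRing A] [CommRing B] {q : ℕ}

lemma one_lt (h : IsCharPower q A) : 1 < q := by
  obtain ⟨p, n, hp, hn, -, rfl⟩ := h
  exact Nat.one_lt_pow hn hp.one_lt

lemma ne_zero (h : IsCharPower q A) : q ≠ 0 := by
  have := h.one_lt
  lia

lemma cast_eq_zero (h : IsCharPower q A) : (q : A) = 0 := by
  obtain ⟨p, n, -, hn, hchar, rfl⟩ := h
  rw [Nat.cast_pow, CharP.cast_eq_zero, _root_.zero_pow hn]

lemma pow (h : IsCharPower q A) {m : ℕ} (hm : m ≠ 0) : IsCharPower (q ^ m) A := by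
  obtain ⟨p, n, hp, hn, hchar, rfl⟩ := h
  exact ⟨p, n * m, hp, Nat.mul_ne_zero hn hm, hchar, (pow_mul p n m).symm⟩

lemma of_injective (h : IsCharPower q A) {φ : A →+* B} (hφ : Function.Injective φ) :
    IsCharPower q B := by
  obtain ⟨p, n, hp, hn, hchar, rfl⟩ := h
  exact ⟨p, n, hp, hn, charP_of_injective_ringHom hφ p, rfl⟩

lemma add_pow (h : IsCharPower q A) (i : ℕ) (x y : A) :
    (x + y) ^ q ^ i = x ^ q ^ i + y ^ q ^ i := by
  obtain ⟨p, n, hp, -, hchar, rfl⟩ := h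
  have := Fact.mk hp
  rw [← pow_mul, add_pow_char_pow]

/-- The ring endomorphism `x ↦ x ^ q ^ i`. -/
def powHom (h : IsCharPower q A) (i : ℕ) : A →+* A where
  toFun x := x ^ q ^ i
  map_one' := one_pow _
  map_mul' x y := mul_pow x y _
  map_zero' := zero_pow (pow_ne_zero i h.ne_zero)
  map_add' := h.add_pow i

lemma powHom_apply (h : IsCharPower q A) (i : ℕ) (x : A) : h.powHom i x = x ^ q ^ i := rfl

lemma zero_pow (h : IsCharPower q A) (i : ℕ) : (0 : A) ^ q ^ i = 0 := map_zero (h.powHom i)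

lemma neg_pow (h : IsCharPower q A) (i : ℕ) (x : A) : (-x) ^ q ^ i = -x ^ q ^ i :=
  map_neg (h.powHom i) x

lemma sub_pow (h : IsCharPower q A) (i : ℕ) (x y : A) :
    (x - y) ^ q ^ i = x ^ q ^ i - y ^ q ^ i :=
  map_sub (h.powHom i) x y

lemma sum_pow (h : IsCharPower q A) (i : ℕ) {ι : Type*} (s : Finset ι) (g : ι → A) :
    (∑ k ∈ s, g k) ^ q ^ i = ∑ k ∈ s, g k ^ q ^ i :=
  map_sum (h.powHom i) g s

lemma add_pow_self (h : IsCharPower q A) (x y : A) : (x + y) ^ q = x ^ q + y ^ q := by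
  simpa using h.add_pow 1 x y

lemma neg_pow_self (h : IsCharPower q A) (x : A) : (-x) ^ q = -x ^ q := by
  simpa using h.neg_pow 1 x

lemma sub_pow_self (h : IsCharPower q A) (x y : A) : (x - y) ^ q = x ^ q - y ^ q := by
  simpa using h.sub_pow 1 x y

lemma sum_pow_self (h : IsCharPower q A) {ι : Type*} (s : Finset ι) (g : ι → A) :
    (∑ k ∈ s, g k) ^ q = ∑ k ∈ s, g k ^ q := by
  simpa using h.sum_pow 1 s g

end CommRing

section Field

variable {K : Type*} [Field K] {q : ℕ}

/-- The subfield of elements fixed by `x ↦ x ^ q`; it has at most `q` elements. -/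
def fixedField (h : IsCharPower q K) : Subfield K :=
  (h.powHom 1).eqLocusField (RingHom.id K)

lemma mem_fixedField (h : IsCharPower q K) {x : K} : x ∈ h.fixedField ↔ x ^ q = x :=
  Iff.of_eq (congrArg (x ^ · = x) (pow_one q))

lemma coe_fixedField_pow (h : IsCharPower q K) (c : h.fixedField) : (c : K) ^ q = c :=
  h.mem_fixedField.mp c.2

end Field

end IsCharPower

section Additive

variable {A B : Type*} [CommRing A] [CommRing B] {p e : ℕ} {α : ℕ → A}

lemma pow_pow_eq_self {q : ℕ} {c : A} (hc : c ^ q = c) (i : ℕ) : c ^ q ^ i = c := by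
  induction i with
  | zero => simp
  | succ i ih => rw [pow_succ, pow_mul, ih, hc]

/-- The trace form `z + z ^ q + ⋯ + z ^ q ^ (m - 1)`; on a field with `q ^ m` elements this is the
trace down to the elements fixed by `x ↦ x ^ q`. -/
def frobTrace (q m : ℕ) (z : A) : A := ∑ i ∈ range m, z ^ q ^ i

lemma frobTrace_pow_sub (h : IsCharPower p A) (m : ℕ) (z : A) :
    frobTrace p m z ^ p - frobTrace p m z = z ^ p ^ m - z := by
  have key := Finset.sum_range_sub (fun i ↦ z ^ p ^ i) m
  simp only [pow_zero, pow_one] at key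
  rw [frobTrace, h.sum_pow_self, ← Finset.sum_sub_distrib, ← key]
  exact Finset.sum_congr rfl fun i _ ↦ by rw [← pow_mul, ← pow_succ]

lemma frobTrace_add (h : IsCharPower p A) (m : ℕ) (x y : A) :
    frobTrace p m (x + y) = frobTrace p m x + frobTrace p m y := by
  simp only [frobTrace, h.add_pow, Finset.sum_add_distrib]

lemma frobTrace_mul_left {c : A} (hc : c ^ p = c) (m : ℕ) (z : A) :
    frobTrace p m (c * z) = c * frobTrace p m z := by
  simp only [frobTrace, mul_pow, pow_pow_eq_self hc, Finset.mul_sum]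

lemma fgen_eq_frobTrace (x y : A) :
    fgen p e α x y = -(∑ i ∈ range e, frobTrace p (e - i) (α i * x ^ p ^ i * y) +
      frobTrace p e (x * Rgen p e α y)) := by
  simp only [fgen, frobTrace, Finset.sum_add_distrib]

lemma map_Rgen (φ : A →+* B) (x : A) :
    φ (Rgen p e α x) = Rgen p e (fun i ↦ φ (α i)) (φ x) := by
  simp [Rgen]

lemma map_Egen (φ : A →+* B) (x : A) :
    φ (Egen p e α x) = Egen p e (fun i ↦ φ (α i)) (φ x) := by
  simp [Egen, map_Rgen]

lemma map_fgen (φ : A →+* B) (x y : A) :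
    φ (fgen p e α x y) = fgen p e (fun i ↦ φ (α i)) (φ x) (φ y) := by
  simp [fgen, map_Rgen]

lemma Rgen_add (h : IsCharPower p A) (x y : A) :
    Rgen p e α (x + y) = Rgen p e α x + Rgen p e α y := by
  simp only [Rgen, h.add_pow, mul_add, Finset.sum_add_distrib]

lemma Rgen_mul_left {c : A} (hc : c ^ p = c) (x : A) :
    Rgen p e α (c * x) = c * Rgen p e α x := by
  simp only [Rgen, mul_pow, pow_pow_eq_self hc, Finset.mul_sum, mul_left_comm]

lemma Egen_add (h : IsCharPower p A) (x y : A) :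
    Egen p e α (x + y) = Egen p e α x + Egen p e α y := by
  simp only [Egen, Rgen_add h, mul_add, h.add_pow, Finset.sum_add_distrib]
  ring

lemma Egen_mul_left {c : A} (hc : c ^ p = c) (x : A) :
    Egen p e α (c * x) = c * Egen p e α x := by
  simp only [Egen, Rgen_mul_left hc, mul_pow, pow_pow_eq_self hc, mul_add, Finset.mul_sum,
    mul_left_comm]

lemma fgen_add_left (h : IsCharPower p A) (x x' y : A) :
    fgen p e α (x + x') y = fgen p e α x y + fgen p e α x' y := by
  simp only [fgen_eq_frobTrace, mul_add, add_mul, h.add_pow, frobTrace_add h,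
    Finset.sum_add_distrib]
  ring

lemma fgen_add_right (h : IsCharPower p A) (x y y' : A) :
    fgen p e α x (y + y') = fgen p e α x y + fgen p e α x y' := by
  simp only [fgen_eq_frobTrace, Rgen_add h, mul_add, frobTrace_add h, Finset.sum_add_distrib]
  ring

lemma fgen_mul_left {c : A} (hc : c ^ p = c) (x y : A) :
    fgen p e α (c * x) y = c * fgen p e α x y := by
  simp only [fgen_eq_frobTrace, mul_pow, pow_pow_eq_self hc, mul_assoc, mul_left_comm _ c,
    frobTrace_mul_left hc, mul_neg, mul_add, Finset.mul_sum]

lemma fgen_mul_right {c : A} (hc : c ^ p = c) (x y : A) :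
    fgen p e α x (c * y) = c * fgen p e α x y := by
  simp only [fgen_eq_frobTrace, Rgen_mul_left hc, mul_left_comm _ c, frobTrace_mul_left hc,
    mul_neg, mul_add, Finset.mul_sum]

section FixedCoefficients

variable (h : IsCharPower p A) (j : ℕ) (hα : ∀ i, α i ^ p ^ j = α i)
include h hα

lemma Rgen_pow (x : A) : Rgen p e α x ^ p ^ j = Rgen p e α (x ^ p ^ j) := by
  simpa [IsCharPower.powHom_apply, hα] using map_Rgen (p := p) (e := e) (α := α) (h.powHom j) x

lemma Egen_pow (x : A) : Egen p e α x ^ p ^ j = Egen p e α (x ^ p ^ j) := by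
  simpa [IsCharPower.powHom_apply, hα] using map_Egen (p := p) (e := e) (α := α) (h.powHom j) x

lemma fgen_pow (x y : A) :
    fgen p e α x y ^ p ^ j = fgen p e α (x ^ p ^ j) (y ^ p ^ j) := by
  simpa [IsCharPower.powHom_apply, hα] using map_fgen (p := p) (e := e) (α := α) (h.powHom j) x y

end FixedCoefficients

lemma mul_Rgen_eq (x y : A) :
    y * Rgen p e α x = ∑ i ∈ range e, α i * x ^ p ^ i * y + α e * x ^ p ^ e * y := by
  rw [Rgen, ← Finset.sum_range_succ (fun i ↦ α i * x ^ p ^ i * y), Finset.mul_sum]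
  exact Finset.sum_congr rfl fun i _ ↦ mul_comm _ _

lemma pow_mul_Egen_eq (x y : A) :
    x ^ p ^ e * Egen p e α y = (x * Rgen p e α y) ^ p ^ e +
      ∑ i ∈ range e, (α i * x ^ p ^ i * y) ^ p ^ (e - i) + α e * x ^ p ^ e * y := by
  have term : ∀ i ∈ range e, x ^ p ^ e * (α i * y) ^ p ^ (e - i) =
      (α i * x ^ p ^ i * y) ^ p ^ (e - i) := fun i hi ↦ by
    rw [mul_pow, mul_pow, mul_pow, ← pow_mul, ← pow_add,
      Nat.add_sub_cancel' (Finset.mem_range.mp hi).le]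
    ring
  rw [← Finset.sum_congr rfl term, ← Finset.mul_sum, Egen, Finset.sum_range_succ, Nat.sub_self,
    pow_zero, pow_one, mul_pow]
  ring

lemma fgen_pow_sub (h : IsCharPower p A) (x y : A) :
    fgen p e α x y ^ p - fgen p e α x y =
      x * Rgen p e α y + y * Rgen p e α x - x ^ p ^ e * Egen p e α y := by
  have telescoped : fgen p e α x y ^ p - fgen p e α x y =
      -(∑ i ∈ range e, ((α i * x ^ p ^ i * y) ^ p ^ (e - i) - α i * x ^ p ^ i * y))
        - ((x * Rgen p e α y) ^ p ^ e - x * Rgen p e α y) := by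
    simp only [← frobTrace_pow_sub h, fgen_eq_frobTrace, h.neg_pow_self, h.add_pow_self,
      h.sum_pow_self, Finset.sum_sub_distrib]
    ring
  rw [telescoped, pow_mul_Egen_eq, mul_Rgen_eq x y, Finset.sum_sub_distrib]
  ring

end Additive

section FixedFieldLinear

variable {K : Type*} [Field K] {p : ℕ}

/-- `Rgen` as a linear map over the field of `p`-power-fixed elements. -/
def rLinear (h : IsCharPower p K) (e : ℕ) (α : ℕ → K) : K →ₗ[h.fixedField] K where
  toFun := Rgen p e α
  map_add' := Rgen_add h
  map_smul' c := Rgen_mul_left (h.coe_fixedField_pow c)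

/-- `Egen` as a linear map over the field of `p`-power-fixed elements; its kernel is the space
`V_R`. -/
def eLinear (h : IsCharPower p K) (e : ℕ) (α : ℕ → K) : K →ₗ[h.fixedField] K where
  toFun := Egen p e α
  map_add' := Egen_add h
  map_smul' c := Egen_mul_left (h.coe_fixedField_pow c)

/-- `fgen` as a bilinear map over the field of `p`-power-fixed elements. -/
def fBilin (h : IsCharPower p K) (e : ℕ) (α : ℕ → K) : K →ₗ[h.fixedField] K →ₗ[h.fixedField] K :=
  LinearMap.mk₂ h.fixedField (fgen p e α) (fgen_add_left h)
    (fun c ↦ fgen_mul_left (h.coe_fixedField_pow c)) (fgen_add_right h)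
    (fun c ↦ fgen_mul_right (h.coe_fixedField_pow c))

variable (h : IsCharPower p K) {e : ℕ} {α : ℕ → K}

lemma rLinear_apply (x : K) : rLinear h e α x = Rgen p e α x := rfl

lemma eLinear_apply (x : K) : eLinear h e α x = Egen p e α x := rfl

lemma fBilin_apply (x y : K) : fBilin h e α x y = fgen p e α x y := rfl

lemma mem_ker_eLinear {x : K} : x ∈ LinearMap.ker (eLinear h e α) ↔ Egen p e α x = 0 :=
  LinearMap.mem_ker

end FixedFieldLinear

section Polynomials

variable {K : Type*} [Field K] {p e : ℕ} {α : ℕ → K}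

lemma ncard_setOf_eval_eq_zero {P : K[X]} (hsep : P.Separable) (hsplits : P.Splits) :
    {x : K | P.eval x = 0}.ncard = P.natDegree := by
  have hroots : {x : K | P.eval x = 0} = P.rootSet K := by
    ext x
    simp [mem_rootSet, hsep.ne_zero]
  rw [hroots, ← Nat.card_coe_set_eq, Nat.card_eq_fintype_card,
    card_rootSet_eq_natDegree hsep (by simpa using hsplits)]

lemma separable_of_derivative_eq_C {P : K[X]} {c : K} (hc : c ≠ 0) (hP : derivative P = C c) :
    P.Separable := by
  rw [Polynomial.Separable, hP]
  exact ⟨0, C c⁻¹, by rw [zero_mul, zero_add, ← C_mul, inv_mul_cancel₀ hc, C_1]⟩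

lemma IsCharPower.separable_X_pow_sub_X (h : IsCharPower p K) :
    (X ^ p - X : K[X]).Separable := by
  refine separable_of_derivative_eq_C (neg_ne_zero.mpr one_ne_zero) ?_
  rw [derivative_sub, derivative_X_pow, h.cast_eq_zero, derivative_X, map_zero, zero_mul, zero_sub,
    C_neg, C_1]

lemma IsCharPower.card_fixedField (h : IsCharPower p K) (hsplits : (X ^ p - X : K[X]).Splits) :
    Nat.card h.fixedField = p := by
  have hroots := ncard_setOf_eval_eq_zero h.separable_X_pow_sub_X hsplits
  rw [FiniteField.X_pow_card_sub_X_natDegree_eq _ h.one_lt] at hroots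
  simp only [eval_sub, eval_pow, eval_X, sub_eq_zero, ← h.mem_fixedField] at hroots
  exact hroots

lemma IsCharPower.finrank_eq_of_natCard_eq (h : IsCharPower p K) (hP : Nat.card h.fixedField = p)
    {V : Type*} [AddCommGroup V] [Module h.fixedField V] {n : ℕ} (hV : Nat.card V = p ^ n) :
    Module.finrank h.fixedField V = n := by
  have : Finite V := Nat.finite_of_card_ne_zero (hV ▸ pow_ne_zero n h.ne_zero)
  have hpow := Module.natCard_eq_pow_finrank (K := h.fixedField) (V := V)
  rw [hP, hV] at hpow
  exact (Nat.pow_right_injective h.one_lt hpow).symm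

lemma eval_Egen (x : K) : (Egen p e (fun i ↦ C (α i)) X : K[X]).eval x = Egen p e α x := by
  simpa using map_Egen (p := p) (e := e) (α := fun i ↦ C (α i)) (evalRingHom x) X

lemma eval_fgen (P Q : K[X]) (x : K) :
    (fgen p e (fun i ↦ C (α i)) P Q).eval x = fgen p e α (P.eval x) (Q.eval x) := by
  simpa using map_fgen (p := p) (e := e) (α := fun i ↦ C (α i)) (evalRingHom x) P Q

lemma Egen_zero {A : Type*} [CommRing A] {α : ℕ → A} (x : A) :
    Egen p 0 α x = 2 * α 0 * x := by
  simp [Egen, Rgen]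
  ring

lemma two_mul_C (c : K) : (2 : K[X]) * C c = C (2 * c) := by
  rw [C_mul]
  rfl

section Degree

variable (hp : 1 < p)
include hp

lemma natDegree_Rgen_le (Q : K[X]) :
    (Rgen p e (fun i ↦ C (α i)) Q).natDegree ≤ p ^ e * Q.natDegree := by
  refine natDegree_sum_le_of_forall_le _ _ fun i hi ↦ ?_
  refine (natDegree_C_mul_le _ _).trans (natDegree_pow_le.trans (Nat.mul_le_mul_right _ ?_))
  exact Nat.pow_le_pow_right hp.le (Nat.lt_succ_iff.mp (Finset.mem_range.mp hi))

lemma natDegree_Rgen_X (hα : α e ≠ 0) :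
    (Rgen p e (fun i ↦ C (α i)) X : K[X]).natDegree = p ^ e := by
  refine le_antisymm (by simpa using natDegree_Rgen_le hp (X : K[X])) (le_natDegree_of_ne_zero ?_)
  have hcoeff : (Rgen p e (fun i ↦ C (α i)) X : K[X]).coeff (p ^ e) = α e := by
    simp [Rgen, coeff_X_pow, Nat.pow_right_inj hp]
  rwa [hcoeff]

lemma natDegree_Egen_X (hα : α e ≠ 0) (hne : e = 0 → (2 : K) ≠ 0) :
    (Egen p e (fun i ↦ C (α i)) X : K[X]).natDegree = p ^ (2 * e) := by
  obtain rfl | he := Nat.eq_zero_or_pos e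
  · rw [Egen_zero, two_mul_C, natDegree_C_mul_X _ (mul_ne_zero (hne rfl) hα), mul_zero, pow_zero]
  have hlead : ((Rgen p e (fun i ↦ C (α i)) X : K[X]) ^ p ^ e).natDegree = p ^ (2 * e) := by
    rw [natDegree_pow, natDegree_Rgen_X hp hα, ← pow_add, two_mul]
  rw [Egen, natDegree_add_eq_left_of_natDegree_lt, hlead]
  refine hlead ▸ (natDegree_sum_le_of_forall_le (n := p ^ e) _ _ fun i _ ↦ ?_).trans_lt
    (Nat.pow_lt_pow_right hp (by lia))
  refine natDegree_pow_le.trans ?_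
  exact (Nat.mul_le_mul (Nat.pow_le_pow_right hp.le (Nat.sub_le e i))
    ((natDegree_C_mul_le _ _).trans natDegree_X_le)).trans_eq (mul_one _)

lemma natDegree_fgen_le (P Q : K[X]) :
    (fgen p e (fun i ↦ C (α i)) P Q).natDegree ≤
      p ^ (e - 1) * (P.natDegree + p ^ e * Q.natDegree) := by
  rw [fgen, natDegree_neg]
  refine natDegree_sum_le_of_forall_le _ _ fun i hi ↦ ?_
  have hi := Finset.mem_range.mp hi
  refine natDegree_add_le_of_degree_le (natDegree_sum_le_of_forall_le _ _ fun j hj ↦ ?_) ?_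
  · have hj := Finset.mem_range.mp hj
    calc ((C (α i) * P ^ p ^ i * Q) ^ p ^ j).natDegree
        ≤ p ^ j * (p ^ i * P.natDegree + Q.natDegree) :=
          natDegree_pow_le.trans (Nat.mul_le_mul_left _ (natDegree_mul_le.trans
            (Nat.add_le_add_right ((natDegree_C_mul_le _ _).trans natDegree_pow_le) _)))
      _ = p ^ (j + i) * P.natDegree + p ^ j * Q.natDegree := by rw [pow_add]; ring
      _ ≤ p ^ (e - 1) * P.natDegree + p ^ (e - 1 + e) * Q.natDegree := by
          gcongr <;> first | exact hp.le | lia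
      _ = p ^ (e - 1) * (P.natDegree + p ^ e * Q.natDegree) := by rw [pow_add]; ring
  · calc ((P * Rgen p e (fun i ↦ C (α i)) Q) ^ p ^ i).natDegree
        ≤ p ^ i * (P.natDegree + p ^ e * Q.natDegree) :=
          natDegree_pow_le.trans (Nat.mul_le_mul_left _ (natDegree_mul_le.trans
            (Nat.add_le_add_left (natDegree_Rgen_le hp Q) _)))
      _ ≤ _ := Nat.mul_le_mul_right _ (Nat.pow_le_pow_right hp.le (by lia))

end Degree

lemma separable_Egen_X (h : IsCharPower p K) (hα : α e ≠ 0) (hne : e = 0 → (2 : K) ≠ 0) :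
    (Egen p e (fun i ↦ C (α i)) X : K[X]).Separable := by
  obtain rfl | he := Nat.eq_zero_or_pos e
  · refine separable_of_derivative_eq_C (mul_ne_zero (hne rfl) hα) ?_
    rw [Egen_zero, two_mul_C, derivative_C_mul_X]
  have derivative_pow_eq_zero (P : K[X]) {j : ℕ} (hj : j ≠ 0) : derivative (P ^ p ^ j) = 0 := by
    rw [derivative_pow, Nat.cast_pow, h.cast_eq_zero, zero_pow hj, map_zero, zero_mul, zero_mul]
  refine separable_of_derivative_eq_C hα ?_
  rw [Egen, derivative_add, derivative_pow_eq_zero _ he.ne', zero_add, Finset.sum_range_succ,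
    derivative_add, derivative_sum, Finset.sum_eq_zero fun i hi ↦ ?_, zero_add, Nat.sub_self,
    pow_zero, pow_one, derivative_C_mul_X]
  exact derivative_pow_eq_zero _ (Nat.sub_ne_zero_of_lt (Finset.mem_range.mp hi))

end Polynomials

section CommutatorPairing

variable {K : Type*} [Field K] {p e : ℕ} {α : ℕ → K}

lemma exists_Egen_ne_zero (hp : 1 < p) (hα : α e ≠ 0) (hne : e = 0 → (2 : K) ≠ 0)
    {s : Finset K} (hs : p ^ (2 * e) < #s) : ∃ x ∈ s, Egen p e α x ≠ 0 := by
  by_contra! hzero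
  have hdeg := natDegree_Egen_X hp hα hne
  rw [eq_zero_of_natDegree_lt_card_of_eval_eq_zero' (Egen p e (fun i ↦ C (α i)) X) s
    (fun x hx ↦ by rw [eval_Egen, hzero x hx]) (hdeg ▸ hs), natDegree_zero] at hdeg
  exact (Nat.pow_pos (zero_lt_one.trans hp)).ne hdeg

lemma fgen_comm_of_forall_mem_comm (hp : 1 < p) {v : K} {s : Finset K} (hs : p ^ (2 * e) ≤ #s)
    (hv : ∀ y ∈ s, fgen p e α v y = fgen p e α y v) (x : K) :
    fgen p e α v x = fgen p e α x v := by
  obtain rfl | he := Nat.eq_zero_or_pos e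
  · simp [fgen]
  set f : K[X] → K[X] → K[X] := fgen p e (fun i ↦ C (α i))
  have hdeg : (f (C v) X - f X (C v)).natDegree < #s :=
    calc (f (C v) X - f X (C v)).natDegree
        ≤ p ^ (e - 1 + e) := by
          refine natDegree_sub_le_of_le (n := p ^ (e - 1 + e)) ?_ ?_ |>.trans_eq (max_self _)
          · simpa [pow_add] using natDegree_fgen_le hp (C v) X
          · exact (natDegree_fgen_le hp X (C v)).trans (by
              simpa using Nat.pow_le_pow_right hp.le (Nat.le_add_right _ _))
      _ < p ^ (2 * e) := Nat.pow_lt_pow_right hp (by lia)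
      _ ≤ #s := hs
  have hzero := eq_zero_of_natDegree_lt_card_of_eval_eq_zero' _ s
    (fun y hy ↦ by simp [f, eval_fgen, hv y hy]) hdeg
  simpa [f, eval_fgen, sub_eq_zero] using congrArg (eval x) hzero

lemma eq_zero_of_forall_fgen_comm (h : IsCharPower p K) {v x : K} (hx : Egen p e α x ≠ 0)
    (hv : Egen p e α v = 0) (hcomm : fgen p e α v x = fgen p e α x v) : v = 0 := by
  have hvx := fgen_pow_sub (α := α) (e := e) h v x
  have hxv := fgen_pow_sub (α := α) (e := e) h x v
  rw [hv, ← hcomm] at hxv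
  have : v ^ p ^ e * Egen p e α x = 0 := by linear_combination hvx - hxv
  exact eq_zero_of_pow_eq_zero ((mul_eq_zero.mp this).resolve_right hx)

variable (h : IsCharPower p K)

lemma fgen_sub_fgen_swap_mem_fixedField {x y : K} (hx : Egen p e α x = 0)
    (hy : Egen p e α y = 0) : fgen p e α x y - fgen p e α y x ∈ h.fixedField := by
  have hxy := fgen_pow_sub (α := α) (e := e) h x y
  have hyx := fgen_pow_sub (α := α) (e := e) h y x
  rw [hy] at hxy
  rw [hx] at hyx
  rw [h.mem_fixedField, h.sub_pow_self]
  linear_combination hxy - hyx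

/-- The commutator pairing `(x, y) ↦ f_R(x, y) - f_R(y, x)` of the group `H_R`, as a bilinear form
on `V_R`. -/
def commutatorForm (e : ℕ) (α : ℕ → K) :
    LinearMap.BilinForm h.fixedField (LinearMap.ker (eLinear h e α)) :=
  LinearMap.mk₂ h.fixedField
    (fun x y ↦ ⟨fBilin h e α x y - fBilin h e α y x,
      fgen_sub_fgen_swap_mem_fixedField h x.2 y.2⟩)
    (fun x x' y ↦ Subtype.ext (by simp; ring))
    (fun c x y ↦ Subtype.ext (by
      simp only [Submodule.coe_smul, map_smul, LinearMap.smul_apply, ← smul_sub]; rfl))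
    (fun x y y' ↦ Subtype.ext (by simp; ring))
    (fun c x y ↦ Subtype.ext (by
      simp only [Submodule.coe_smul, map_smul, LinearMap.smul_apply, ← smul_sub]; rfl))

lemma commutatorForm_eq_zero_iff {x y : LinearMap.ker (eLinear h e α)} :
    commutatorForm h e α x y = 0 ↔ fgen p e α x y = fgen p e α y x :=
  Subtype.ext_iff.trans sub_eq_zero

variable [IsAlgClosed K] (hα : α e ≠ 0) (hne : e = 0 → (2 : K) ≠ 0)
include hα hne

lemma card_ker_eLinear : Nat.card (LinearMap.ker (eLinear h e α)) = p ^ (2 * e) := by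
  rw [← natDegree_Egen_X h.one_lt hα hne,
    ← ncard_setOf_eval_eq_zero (separable_Egen_X h hα hne) (IsAlgClosed.splits _)]
  simp only [eval_Egen]
  rfl

lemma finite_ker_eLinear : Finite (LinearMap.ker (eLinear h e α)) :=
  Nat.finite_of_card_ne_zero (card_ker_eLinear h hα hne ▸ pow_ne_zero _ h.ne_zero)

include h in
lemma eq_zero_of_mem_ker_of_forall_comm {v : K} (hv : Egen p e α v = 0)
    (hcomm : ∀ y, Egen p e α y = 0 → fgen p e α v y = fgen p e α y v) : v = 0 := by
  have hfinite : (LinearMap.ker (eLinear h e α) : Set K).Finite := finite_ker_eLinear h hα hne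
  have hcard : #hfinite.toFinset = p ^ (2 * e) := by
    rw [← card_ker_eLinear h hα hne, ← Set.ncard_eq_toFinset_card _ hfinite]
    rfl
  obtain ⟨s, hs⟩ := Infinite.exists_subset_card_eq K (p ^ (2 * e) + 1)
  obtain ⟨x, -, hx⟩ := exists_Egen_ne_zero h.one_lt hα hne (s := s) (by lia)
  refine eq_zero_of_forall_fgen_comm h hx hv
    (fgen_comm_of_forall_mem_comm h.one_lt hcard.ge (fun y hy ↦ hcomm y ?_) x)
  exact (mem_ker_eLinear h).mp (by simpa using hy)

lemma nondegenerate_commutatorForm : (commutatorForm h e α).Nondegenerate := by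
  constructor
  · exact fun x hx ↦ Subtype.ext <| eq_zero_of_mem_ker_of_forall_comm h hα hne x.2 fun y hy ↦
      (commutatorForm_eq_zero_iff h (y := ⟨y, hy⟩)).mp (hx _)
  · exact fun x hx ↦ Subtype.ext <| eq_zero_of_mem_ker_of_forall_comm h hα hne x.2 fun y hy ↦
      ((commutatorForm_eq_zero_iff h (x := ⟨y, hy⟩)).mp (hx _)).symm

end CommutatorPairing

section Isotropic

variable {K : Type*} [Field K] {p : ℕ} (h : IsCharPower p K)

/-- A subspace of `V_R` on which the commutator pairing vanishes. -/
structure IsIsotropic (e : ℕ) (α : ℕ → K) (W : Submodule h.fixedField K) : Prop where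
  Egen_eq_zero : ∀ w ∈ W, Egen p e α w = 0
  fgen_comm : ∀ v ∈ W, ∀ w ∈ W, fgen p e α v w = fgen p e α w v

/-- A subspace of `V_R` equal to its orthogonal complement for the commutator pairing. -/
structure IsLagrangian (e : ℕ) (α : ℕ → K) (W : Submodule h.fixedField K) : Prop
    extends IsIsotropic h e α W where
  mem_of_comm : ∀ v, Egen p e α v = 0 → (∀ w ∈ W, fgen p e α v w = fgen p e α w v) → v ∈ W

variable {h} {e : ℕ} {α : ℕ → K}

lemma IsIsotropic.span {s : Set K} (hE : ∀ x ∈ s, Egen p e α x = 0)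
    (hcomm : ∀ x ∈ s, ∀ y ∈ s, fgen p e α x y = fgen p e α y x) :
    IsIsotropic h e α (Submodule.span h.fixedField s) where
  Egen_eq_zero w hw := (Submodule.span_le (p := LinearMap.ker (eLinear h e α))).mpr hE hw
  fgen_comm v hv w hw := by
    let centralizer (x : K) : Submodule h.fixedField K :=
      LinearMap.eqLocus (fBilin h e α x) ((fBilin h e α).flip x)
    have hright : ∀ x ∈ s, w ∈ centralizer x := fun x hx ↦
      (Submodule.span_le (p := centralizer x)).mpr (hcomm x hx) hw
    exact ((Submodule.span_le (p := centralizer w)).mpr (fun x hx ↦ (hright x hx).symm) hv).symm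

lemma IsIsotropic.span_insert {W : Submodule h.fixedField K} (hW : IsIsotropic h e α W) {v : K}
    (hv : Egen p e α v = 0) (hcomm : ∀ w ∈ W, fgen p e α v w = fgen p e α w v) :
    IsIsotropic h e α (Submodule.span h.fixedField (insert v W)) := by
  refine .span (Set.forall_mem_insert.mpr ⟨hv, hW.Egen_eq_zero⟩) ?_
  rintro x (rfl | hx) y (rfl | hy)
  · rfl
  · exact hcomm y hy
  · exact (hcomm x hx).symm
  · exact hW.fgen_comm x hx y hy

/-- The preimage of a subspace under an embedding of fields, as a subspace over the smaller field
of `p`-power-fixed elements. -/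
def comapFixedField {k : Type*} [Field k] (hk : IsCharPower p k) (ι : k →+* K)
    (W : Submodule h.fixedField K) : Submodule hk.fixedField k where
  carrier := {x | ι x ∈ W}
  zero_mem' := by simp
  add_mem' hx hy := by simpa using W.add_mem hx hy
  smul_mem' c x hx := by
    have hc : ι c ∈ h.fixedField := by
      rw [h.mem_fixedField, ← map_pow, hk.coe_fixedField_pow]
    simpa [Subfield.smul_def] using W.smul_mem ⟨ι c, hc⟩ hx

lemma mem_comapFixedField {k : Type*} [Field k] {hk : IsCharPower p k} {ι : k →+* K}
    {W : Submodule h.fixedField K} {x : k} : x ∈ comapFixedField hk ι W ↔ ι x ∈ W := Iff.rfl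

lemma IsIsotropic.comap {k : Type*} [Field k] (hk : IsCharPower p k) (ι : k →+* K) {β : ℕ → k}
    {W : Submodule h.fixedField K} (hW : IsIsotropic h e (fun i ↦ ι (β i)) W) :
    IsIsotropic hk e β (comapFixedField hk ι W) where
  Egen_eq_zero w hw := ι.injective (by rw [map_Egen, map_zero, hW.Egen_eq_zero _ hw])
  fgen_comm v hv w hw := ι.injective (by rw [map_fgen, map_fgen, hW.fgen_comm _ hv _ hw])

lemma natCard_eq_of_orthogonal_eq {P V : Type*} [Field P] [AddCommGroup V] [Module P V] [Finite V]
    {B : LinearMap.BilinForm P V} (hB : B.Nondegenerate) {W : Submodule P V}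
    (hW : B.orthogonal W = W) {n : ℕ} (hV : Module.finrank P V = 2 * n) :
    Nat.card W = Nat.card P ^ n := by
  have horth := LinearMap.BilinForm.finrank_orthogonal hB W
  rw [hW, hV] at horth
  have hn : Module.finrank P W = n := by
    have := hV ▸ Submodule.finrank_le W
    lia
  rw [Module.natCard_eq_pow_finrank (K := P), hn]

namespace IsLagrangian

variable {W : Submodule h.fixedField K} (hW : IsLagrangian h e α W)
include hW

lemma orthogonal_submoduleOf : (commutatorForm h e α).orthogonal
    (W.submoduleOf (LinearMap.ker (eLinear h e α))) = W.submoduleOf _ := by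
  ext v
  rw [LinearMap.BilinForm.mem_orthogonal_iff]
  constructor
  · intro hv
    refine hW.mem_of_comm v v.2 fun w hw ↦ ?_
    exact ((commutatorForm_eq_zero_iff h).mp (hv ⟨w, hW.Egen_eq_zero w hw⟩ hw)).symm
  · exact fun hv w hw ↦ (commutatorForm_eq_zero_iff h).mpr (hW.fgen_comm w hw v hv)

lemma natCard_eq [IsAlgClosed K] (hα : α e ≠ 0) (hne : e = 0 → (2 : K) ≠ 0) :
    Nat.card W = p ^ e := by
  have := finite_ker_eLinear h hα hne
  have hP : Nat.card h.fixedField = p := h.card_fixedField (IsAlgClosed.splits _)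
  have hV : Module.finrank h.fixedField (LinearMap.ker (eLinear h e α)) = 2 * e :=
    h.finrank_eq_of_natCard_eq hP (card_ker_eLinear h hα hne)
  have hcard := natCard_eq_of_orthogonal_eq (nondegenerate_commutatorForm h hα hne)
    hW.orthogonal_submoduleOf hV
  rw [hP] at hcard
  rw [← hcard, Nat.card_congr (Submodule.submoduleOfEquivOfLe (p := W) hW.Egen_eq_zero).toEquiv]

variable {j : ℕ} (hα : ∀ i, α i ^ p ^ j = α i) (hfix : ∀ w ∈ W, w ^ p ^ j = w) {v : K}
  (hv : Egen p e α v = 0)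
include hα hfix hv

lemma pow_sub_self_mem : v ^ p ^ j - v ∈ W := by
  have hvj : Egen p e α (v ^ p ^ j) = 0 := by rw [← Egen_pow h j hα, hv, h.zero_pow]
  refine hW.mem_of_comm _ ?_ fun w hw ↦ ?_
  · rw [← eLinear_apply h, map_sub, eLinear_apply, eLinear_apply, hvj, hv, sub_zero]
  · have hpair := pow_pow_eq_self (h.mem_fixedField.mp
      (fgen_sub_fgen_swap_mem_fixedField h hv (hW.Egen_eq_zero w hw))) j
    rw [h.sub_pow, fgen_pow h j hα, fgen_pow h j hα, hfix w hw] at hpair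
    rw [← fBilin_apply h, ← fBilin_apply h, map_sub, map_sub, LinearMap.sub_apply]
    simp only [fBilin_apply]
    linear_combination hpair

lemma pow_pow_mul_eq (k : ℕ) : v ^ p ^ (j * k) = v + k * (v ^ p ^ j - v) := by
  induction k with
  | zero => simp
  | succ k ih =>
    have hk : (k : K) ^ p ^ j = k := map_natCast (h.powHom j) k
    rw [mul_add, mul_one, pow_add, pow_mul, ih, h.add_pow, mul_pow, hk,
      hfix _ (hW.pow_sub_self_mem hα hfix hv)]
    push_cast
    ring

lemma pow_pow_mul_char_eq_self {ℓ : ℕ} (hℓ : (ℓ : K) = 0) : v ^ p ^ (j * ℓ) = v := by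
  rw [hW.pow_pow_mul_eq hα hfix hv, hℓ, zero_mul, add_zero]

end IsLagrangian

end Isotropic

section MaximalAbelian

variable {K : Type*} [Field K] {p e : ℕ} {α : ℕ → K}

/-- `S` is an abelian subgroup of `H_R`. -/
structure IsAbelianSubgroup (p e : ℕ) (α : ℕ → K) (S : Set (K × K)) : Prop where
  subset : S ⊆ Hset p e α
  zero_mem : (0, 0) ∈ S
  mul_mem : ∀ h ∈ S, ∀ h' ∈ S, Hmul p e α h h' ∈ S
  exists_inv : ∀ h ∈ S, ∃ h' ∈ S, Hmul p e α h h' = (0, 0)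
  comm : ∀ h ∈ S, ∀ h' ∈ S, Hmul p e α h h' = Hmul p e α h' h

/-- `S` is an abelian subgroup of `H_R` that no other abelian subgroup contains. -/
structure IsMaximalAbelianSubgroup (p e : ℕ) (α : ℕ → K) (S : Set (K × K)) : Prop
    extends IsAbelianSubgroup p e α S where
  eq_of_subset : ∀ T, IsAbelianSubgroup p e α T → S ⊆ T → T = S

variable {h : IsCharPower p K}

lemma IsIsotropic.isAbelianSubgroup {W : Submodule h.fixedField K} (hW : IsIsotropic h e α W) :
    IsAbelianSubgroup p e α {z ∈ Hset p e α | z.1 ∈ W} where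
  subset := Set.sep_subset _ _
  zero_mem := by
    have hE : Egen p e α 0 = 0 := map_zero (eLinear h e α)
    simp [Hset, hE, h.ne_zero]
  mul_mem := by
    rintro ⟨x, b⟩ ⟨⟨-, hb⟩, hx⟩ ⟨y, c⟩ ⟨⟨hEy, hc⟩, hy⟩
    have hxy : x + y ∈ W := W.add_mem hx hy
    refine ⟨⟨hW.Egen_eq_zero _ hxy, ?_⟩, hxy⟩
    have hf := fgen_pow_sub (α := α) (e := e) h x y
    simp only [Hmul, h.add_pow_self, Rgen_add h] at hb hc hEy ⊢
    rw [hEy] at hf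
    linear_combination hb + hc + hf
  exists_inv := by
    rintro ⟨x, b⟩ ⟨⟨hEx, hb⟩, hx⟩
    have hR : Rgen p e α (-x) = -Rgen p e α x := map_neg (rLinear h e α) x
    have hfneg : fgen p e α x (-x) = -fgen p e α x x := map_neg (fBilin h e α x) x
    have hf := fgen_pow_sub (α := α) (e := e) h x x
    simp only at hEx hb
    refine ⟨(-x, -b + fgen p e α x x),
      ⟨⟨hW.Egen_eq_zero _ (W.neg_mem hx), ?_⟩, W.neg_mem hx⟩, ?_⟩
    · simp only [h.add_pow_self, h.neg_pow_self, hR]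
      rw [hEx] at hf
      linear_combination hf - hb
    · simp [Hmul, hfneg]
  comm := by
    rintro ⟨x, b⟩ ⟨-, hx⟩ ⟨y, c⟩ ⟨-, hy⟩
    simp only [Hmul, hW.fgen_comm x hx y hy, add_comm x y, add_comm b c]

lemma exists_pow_sub_self_eq [IsAlgClosed K] (hp : 1 < p) (c : K) : ∃ b : K, b ^ p - b = c := by
  have hdeg : (X ^ p - X - C c : K[X]).natDegree = p := by
    rw [natDegree_sub_C, FiniteField.X_pow_card_sub_X_natDegree_eq _ hp]
  obtain ⟨b, hb⟩ := IsAlgClosed.exists_root (X ^ p - X - C c : K[X]) fun h0 ↦ by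
    have hp0 : p = 0 := hdeg.symm.trans (natDegree_eq_zero_iff_degree_le_zero.mpr h0.le)
    lia
  exact ⟨b, by simpa [sub_eq_zero] using hb⟩

theorem IsMaximalAbelianSubgroup.exists_isLagrangian [IsAlgClosed K] {S : Set (K × K)}
    (hS : IsMaximalAbelianSubgroup p e α S) (h : IsCharPower p K) :
    ∃ W : Submodule h.fixedField K, IsLagrangian h e α W ∧ ∀ w ∈ W, ∃ b, (w, b) ∈ S := by
  set W := Submodule.span h.fixedField (Prod.fst '' S)
  have hWiso : IsIsotropic h e α W := by
    refine .span ?_ ?_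
    · rintro _ ⟨z, hz, rfl⟩
      exact (hS.subset hz).1
    · rintro _ ⟨z, hz, rfl⟩ _ ⟨z', hz', rfl⟩
      have hcomm := congrArg Prod.snd (hS.comm z hz z' hz')
      simp only [Hmul] at hcomm
      linear_combination hcomm
  have lift_mem {W' : Submodule h.fixedField K} (hW' : IsIsotropic h e α W') (hle : W ≤ W') {w : K}
      (hw : w ∈ W') : ∃ b, (w, b) ∈ S := by
    obtain ⟨b, hb⟩ := exists_pow_sub_self_eq h.one_lt (w * Rgen p e α w)
    refine ⟨b, hS.eq_of_subset _ hW'.isAbelianSubgroup (fun z hz ↦ ⟨hS.subset hz, ?_⟩) ▸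
      ⟨⟨hW'.Egen_eq_zero w hw, hb⟩, hw⟩⟩
    exact hle (Submodule.subset_span ⟨z, hz, rfl⟩)
  refine ⟨W, ⟨hWiso, fun v hv hcomm ↦ ?_⟩, fun w ↦ lift_mem hWiso le_rfl⟩
  obtain ⟨b, hb⟩ := lift_mem (hWiso.span_insert hv hcomm)
    ((Set.subset_insert v W).trans Submodule.subset_span)
    (Submodule.subset_span (Set.mem_insert v W))
  exact Submodule.subset_span ⟨(v, b), hb, rfl⟩

end MaximalAbelian

section FiniteField

section FrobTrace

variable {A : Type*} [CommRing A] {q : ℕ}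

lemma frobTrace_pow_self_sub (h : IsCharPower q A) (m : ℕ) (z : A) :
    frobTrace q m (z ^ q - z) = z ^ q ^ m - z := by
  have key := Finset.sum_range_sub (fun i ↦ z ^ q ^ i) m
  simp only [pow_zero, pow_one] at key
  rw [← key]
  exact Finset.sum_congr rfl fun i _ ↦ by rw [h.sub_pow, ← pow_mul, ← pow_succ']

lemma frobTrace_sub (h : IsCharPower q A) (m : ℕ) (x y : A) :
    frobTrace q m (x - y) = frobTrace q m x - frobTrace q m y := by
  simp only [frobTrace, h.sub_pow, Finset.sum_sub_distrib]

end FrobTrace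

variable {k : Type*} [Field k] {q m : ℕ} (h : IsCharPower q k)
  (hcard : Nat.card k = q ^ m)

lemma pow_card_pow_eq_self [Finite k] (hcard : Nat.card k = q ^ m) (x : k) : x ^ q ^ m = x := by
  have := Fintype.ofFinite k
  rw [← hcard, Nat.card_eq_fintype_card, FiniteField.pow_card]

section FixedField

variable [Finite k]
include h hcard

lemma frobTrace_pow_self (z : k) : frobTrace q m z ^ q = frobTrace q m z := by
  rw [← sub_eq_zero, frobTrace_pow_sub h, pow_card_pow_eq_self hcard, sub_self]

lemma IsCharPower.natCard_fixedField : Nat.card h.fixedField = q := by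
  have hX : IsCharPower q k[X] := h.of_injective (φ := C) C_injective
  have hdvd : (X ^ q - X : k[X]) ∣ X ^ Nat.card k - X := by
    rw [hcard, ← frobTrace_pow_self_sub hX]
    exact Finset.dvd_sum fun i _ ↦ dvd_pow_self _ (pow_ne_zero i h.ne_zero)
  have hne : (X ^ Nat.card k - X : k[X]) ≠ 0 :=
    FiniteField.X_pow_card_sub_X_ne_zero k Finite.one_lt_card
  exact h.card_fixedField ((Polynomial.splits_X_pow_nat_card_sub_X (K := k)).of_dvd hne hdvd)

lemma IsCharPower.finrank_fixedField : Module.finrank h.fixedField k = m :=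
  h.finrank_eq_of_natCard_eq (h.natCard_fixedField hcard) hcard

lemma IsCharPower.coe_trace_fixedField (z : k) :
    (Algebra.trace h.fixedField k z : k) = frobTrace q m z := by
  have htrace := FiniteField.algebraMap_trace_eq_sum_pow h.fixedField k z
  rwa [h.finrank_fixedField hcard, h.natCard_fixedField hcard] at htrace

/-- The additive form of Hilbert's Theorem 90. -/
lemma exists_pow_sub_self_eq_of_frobTrace_eq_zero {z : k} (hz : frobTrace q m z = 0) :
    ∃ w : k, w ^ q - w = z := by
  let T : k →ₗ[h.fixedField] k :=
    { toFun := fun w ↦ w ^ q - w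
      map_add' := fun x y ↦ by rw [h.add_pow_self]; ring
      map_smul' := fun c x ↦ by
        simp only [Subfield.smul_def, smul_eq_mul, mul_pow, h.coe_fixedField_pow, mul_sub,
          RingHom.id_apply] }
  have hker : LinearMap.ker T = LinearMap.range (Algebra.linearMap h.fixedField k) := by
    ext x
    rw [LinearMap.mem_ker, LinearMap.mem_range]
    exact sub_eq_zero.trans (h.mem_fixedField.symm.trans ⟨fun hx ↦ ⟨⟨x, hx⟩, rfl⟩,
      fun ⟨c, hc⟩ ↦ hc ▸ c.2⟩)
  have hT := T.finrank_range_add_finrank_ker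
  have htrace := (Algebra.trace h.fixedField k).finrank_range_add_finrank_ker
  rw [hker, LinearMap.finrank_range_of_inj (f := Algebra.linearMap h.fixedField k)
    (FaithfulSMul.algebraMap_injective _ _), Module.finrank_self] at hT
  rw [LinearMap.range_eq_top.mpr (Algebra.trace_surjective h.fixedField k), finrank_top,
    Module.finrank_self] at htrace
  have hle : LinearMap.range T ≤ LinearMap.ker (Algebra.trace h.fixedField k) := by
    rintro _ ⟨w, rfl⟩
    refine Subtype.ext ?_
    rw [h.coe_trace_fixedField hcard]
    exact (frobTrace_pow_self_sub h m w).trans (by rw [pow_card_pow_eq_self hcard, sub_self]; rfl)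
  have hmem : z ∈ LinearMap.ker (Algebra.trace h.fixedField k) :=
    Subtype.ext ((h.coe_trace_fixedField hcard z).trans hz)
  have hfinrank := Nat.add_right_cancel (hT.trans (htrace.symm.trans (add_comm _ _)))
  exact (Submodule.eq_of_le_of_finrank_eq hle hfinrank).ge hmem

end FixedField

section InvariantCharacters

/-- A nontrivial complex character of `k` invariant under `z ↦ z ^ q`; for a finite field these
are the nontrivial characters of the fixed field of `z ↦ z ^ q` composed with the trace. -/
structure IsInvariantChar (q : ℕ) (ψ : AddChar k ℂ) : Prop where
  ne_one : ψ ≠ 1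
  apply_pow : ∀ z, ψ (z ^ q) = ψ z

lemma exists_isInvariantChar [Finite k] (h : IsCharPower q k) (hcard : Nat.card k = q ^ m) :
    ∃ ψ : AddChar k ℂ, IsInvariantChar q ψ := by
  obtain ⟨θ, hθ⟩ := AddChar.exists_apply_ne_zero.mpr (one_ne_zero (α := h.fixedField))
  refine ⟨θ.compAddMonoidHom (Algebra.trace h.fixedField k).toAddMonoidHom, ?_, fun z ↦ ?_⟩
  · obtain ⟨z, hz⟩ := Algebra.trace_surjective h.fixedField k 1
    exact AddChar.ne_one_iff.mpr ⟨z, by simpa [hz] using hθ⟩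
  · have htrace : Algebra.trace h.fixedField k (z ^ q) = Algebra.trace h.fixedField k z := by
      refine Subtype.ext (sub_eq_zero.mp ?_)
      rw [← AddSubgroupClass.coe_sub, ← map_sub, h.coe_trace_fixedField hcard,
        frobTrace_pow_self_sub h, pow_card_pow_eq_self hcard, sub_self]
    exact congrArg θ htrace

namespace IsInvariantChar

variable {ψ : AddChar k ℂ} (hψ : IsInvariantChar q ψ)
include hψ

lemma apply_pow_pow (i : ℕ) (z : k) : ψ (z ^ q ^ i) = ψ z := by
  induction i with
  | zero => simp
  | succ i ih => rw [pow_succ, pow_mul, hψ.apply_pow, ih]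

lemma pow (i : ℕ) : IsInvariantChar (q ^ i) ψ := ⟨hψ.ne_one, hψ.apply_pow_pow i⟩

lemma mulShift {c : k} (hc : c ^ q = c) (hc0 : c ≠ 0) : IsInvariantChar q (ψ.mulShift c) where
  ne_one := (AddChar.mulShift_unit_eq_one_iff ψ hc0.isUnit).not.mpr hψ.ne_one
  apply_pow z := by
    simp only [AddChar.mulShift_apply]
    rw [← hψ.apply_pow (c * z), mul_pow, hc]

variable [Finite k]

include h hcard

lemma apply_eq_one {z : k} (hz : frobTrace q m z = 0) : ψ z = 1 := by
  obtain ⟨w, rfl⟩ := exists_pow_sub_self_eq_of_frobTrace_eq_zero h hcard hz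
  rw [AddChar.map_sub_eq_div, hψ.apply_pow, div_self (ψ.val_isUnit w).ne_zero]

lemma apply_eq_of_frobTrace_eq {x y : k} (hxy : frobTrace q m x = frobTrace q m y) :
    ψ x = ψ y := by
  have hdiff : frobTrace q m (x - y) = 0 := by rw [frobTrace_sub h, hxy, sub_self]
  rw [← sub_add_cancel x y, AddChar.map_add_eq_mul, hψ.apply_eq_one h hcard hdiff, one_mul]

lemma exists_mul_apply_ne_one {z : k} (hz : frobTrace q m z ≠ 0) :
    ∃ c : h.fixedField, ψ (c * z) ≠ 1 := by
  obtain ⟨x, hx⟩ := AddChar.ne_one_iff.mp hψ.ne_one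
  have hc : (frobTrace q m x / frobTrace q m z) ^ q = frobTrace q m x / frobTrace q m z := by
    rw [div_pow, frobTrace_pow_self h hcard, frobTrace_pow_self h hcard]
  refine ⟨⟨_, h.mem_fixedField.mpr hc⟩, ?_⟩
  rwa [hψ.apply_eq_of_frobTrace_eq h hcard (y := x)]
  rw [frobTrace_mul_left hc, div_mul_cancel₀ _ hz]

lemma sum_fixedField_mul [DecidableEq k] [Fintype h.fixedField] (z : k) :
    ∑ c : h.fixedField, ψ (c * z) = if frobTrace q m z = 0 then (q : ℂ) else 0 := by
  classical
  let χ : AddChar h.fixedField ℂ :=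
    (ψ.mulShift z).compAddMonoidHom h.fixedField.subtype.toAddMonoidHom
  have hχ_apply (c : h.fixedField) : χ c = ψ (c * z) := congrArg ψ (mul_comm z c)
  have hχ : χ = 0 ↔ frobTrace q m z = 0 := by
    rw [← not_iff_not]
    constructor
    · intro hχ hz
      refine hχ (DFunLike.ext χ 0 fun c ↦ ?_)
      rw [hχ_apply, hψ.apply_eq_one h hcard, AddChar.zero_apply]
      rw [frobTrace_mul_left (h.coe_fixedField_pow c), hz, mul_zero]
    · intro hz
      obtain ⟨c, hc⟩ := hψ.exists_mul_apply_ne_one h hcard hz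
      exact AddChar.ne_zero_iff.mpr ⟨c, hχ_apply c ▸ hc⟩
  have hsum := AddChar.sum_eq_ite χ
  simp only [hχ, hχ_apply, ← Nat.card_eq_fintype_card, h.natCard_fixedField hcard] at hsum
  exact hsum

end IsInvariantChar

end InvariantCharacters

section PointCount

variable [Fintype k] [DecidableEq k]
include h hcard

lemma card_filter_pow_sub_self_eq (z : k) :
    #{y : k | y ^ q - y = z} = if frobTrace q m z = 0 then q else 0 := by
  split_ifs with hz
  · classical
    obtain ⟨w, hw⟩ := exists_pow_sub_self_eq_of_frobTrace_eq_zero h hcard hz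
    have hbij : #{y : k | y ^ q - y = z} = #{y : k | y ∈ h.fixedField} := by
      refine Finset.card_equiv (Equiv.subRight w) fun y ↦ ?_
      rw [Equiv.subRight_apply, mem_filter_univ, mem_filter_univ, h.mem_fixedField,
        h.sub_pow_self, ← hw]
      constructor <;> intro hy <;> linear_combination hy
    rw [hbij, ← Fintype.card_subtype, ← Nat.card_eq_fintype_card]
    exact h.natCard_fixedField hcard
  · rw [Finset.card_eq_zero, Finset.filter_eq_empty_iff]
    rintro y - rfl
    exact hz (by rw [frobTrace_pow_self_sub h, pow_card_pow_eq_self hcard, sub_self])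

/-- Detecting `y ^ q - y = g` by characters of the fixed field reduces the point count to the
exponential sum `S`. -/
lemma card_filter_pow_sub_self_eq_of_sum_eq {S : ℂ} (g : k → k)
    (hS : ∀ ψ : AddChar k ℂ, IsInvariantChar q ψ → ∑ x, ψ (g x) = S) :
    (#{z : k × k | z.2 ^ q - z.2 = g z.1} : ℂ) = q ^ m + (q - 1) * S := by
  have := Fintype.ofFinite h.fixedField
  obtain ⟨ψ, hψ⟩ := exists_isInvariantChar h hcard
  have hcardP : Fintype.card h.fixedField = q := by
    rw [← Nat.card_eq_fintype_card, h.natCard_fixedField hcard]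
  have hshift (c : h.fixedField) (hc : c ≠ 0) : ∑ x, ψ (c * g x) = S :=
    hS _ (hψ.mulShift (h.coe_fixedField_pow c) (by simpa using hc))
  calc (#{z : k × k | z.2 ^ q - z.2 = g z.1} : ℂ)
      = ∑ x, (#{y : k | y ^ q - y = g x} : ℂ) := by
        simp only [Finset.card_filter, Nat.cast_sum, Fintype.sum_prod_type]
    _ = ∑ x, ∑ c : h.fixedField, ψ (c * g x) := by
        simp only [hψ.sum_fixedField_mul h hcard, card_filter_pow_sub_self_eq h hcard,
          Nat.cast_ite, Nat.cast_zero]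
    _ = ∑ x, ψ ((0 : h.fixedField) * g x) + ∑ c ∈ {0}ᶜ, ∑ x, ψ ((c : h.fixedField) * g x) := by
        rw [Finset.sum_comm, Fintype.sum_eq_add_sum_compl 0]
    _ = Fintype.card k + (q - 1) * S := by
        rw [Finset.sum_congr rfl fun c hc ↦ hshift c (by simpa using hc)]
        simp [Finset.card_compl, hcardP, Nat.cast_sub h.one_lt.le]
    _ = q ^ m + (q - 1) * S := by
        rw [← Nat.card_eq_fintype_card, hcard, Nat.cast_pow]

end PointCount

end FiniteField

section AdditivePolynomials

variable {K : Type*} [Field K] {p : ℕ} (h : IsCharPower p K) {n : ℕ}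

/-- The map `x ↦ x ^ p ^ i`, linear over the field of `p`-power-fixed elements. -/
def powLinear (i : ℕ) : K →ₗ[h.fixedField] K where
  toFun x := x ^ p ^ i
  map_add' := h.add_pow i
  map_smul' c x := by
    simp only [Subfield.smul_def, smul_eq_mul, mul_pow, RingHom.id_apply,
      pow_pow_eq_self (h.coe_fixedField_pow c)]

lemma powLinear_apply (i : ℕ) (x : K) : powLinear h i x = x ^ p ^ i := rfl

/-- The map `x ↦ ∑ i < n, c i * x ^ p ^ i` given by an additive polynomial, as a function of its
coefficients `c`. -/
def addPoly (n : ℕ) : (Fin n → K) →ₗ[K] K →ₗ[h.fixedField] K :=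
  Fintype.linearCombination K fun i : Fin n ↦ powLinear h i

/-- The space of maps `x ↦ ∑ i < n, c i * x ^ p ^ i`. -/
def addPolys (n : ℕ) : Submodule K (K →ₗ[h.fixedField] K) := LinearMap.range (addPoly h n)

variable {h}

lemma addPoly_apply (c : Fin n → K) (x : K) : addPoly h n c x = ∑ i, c i * x ^ p ^ (i : ℕ) := by
  simp [addPoly, Fintype.linearCombination_apply, powLinear_apply]

lemma powLinear_mem_addPolys {i : ℕ} (hi : i < n) : powLinear h i ∈ addPolys h n := by
  rw [addPolys, addPoly, Fintype.range_linearCombination]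
  exact Submodule.subset_span ⟨⟨i, hi⟩, rfl⟩

lemma addPolys_mono : Monotone (addPolys h) := by
  rintro m n hmn _ ⟨c, rfl⟩
  rw [addPoly, Fintype.linearCombination_apply]
  exact Submodule.sum_mem _ fun i _ ↦ Submodule.smul_mem _ _
    (powLinear_mem_addPolys (i.2.trans_le hmn))

lemma mem_addPolys_succ {g : K →ₗ[h.fixedField] K} (hg : g ∈ addPolys h (n + 1)) :
    ∃ c : K, g - c • powLinear h n ∈ addPolys h n := by
  obtain ⟨c, rfl⟩ := hg
  refine ⟨c (Fin.last n), fun i ↦ c i.castSucc, ?_⟩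
  ext x
  simp [addPoly_apply, Fin.sum_univ_castSucc, powLinear_apply]

lemma powLinear_comp_mem_addPolys {g : K →ₗ[h.fixedField] K} (hg : g ∈ addPolys h n) (i : ℕ) :
    powLinear h i ∘ₗ g ∈ addPolys h (n + i) := by
  obtain ⟨c, rfl⟩ := hg
  have hcomp : powLinear h i ∘ₗ addPoly h n c =
      ∑ j : Fin n, c j ^ p ^ i • powLinear h (j + i) := by
    ext x
    simp [addPoly_apply, powLinear_apply, mul_pow, ← pow_mul, ← pow_add]
  rw [hcomp]
  exact Submodule.sum_mem _ fun j _ ↦ Submodule.smul_mem _ _ (powLinear_mem_addPolys (by lia))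

lemma addPoly_pow (c : Fin n → K) (x : K) (i : ℕ) :
    addPoly h n c x ^ p ^ i = addPoly h n (fun j ↦ c j ^ p ^ i) (x ^ p ^ i) := by
  simp only [addPoly_apply, h.sum_pow, mul_pow, ← pow_mul, mul_comm]

section Restriction

variable {W : Submodule h.fixedField K}

lemma eq_zero_of_addPoly_eq_zero (hW : p ^ n ≤ Nat.card W) {c : Fin n → K}
    (hc : ∀ w ∈ W, addPoly h n c w = 0) : c = 0 := by
  have hp := h.one_lt
  have : Finite W := Nat.finite_of_card_ne_zero ((Nat.pow_pos hp.pos).trans_le hW).ne'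
  set G : K[X] := ∑ i : Fin n, C (c i) * X ^ p ^ (i : ℕ)
  have hdeg : G.natDegree < p ^ n := by
    obtain _ | n := n
    · simp [G]
    · refine (natDegree_sum_le_of_forall_le (n := p ^ n) _ _ fun i _ ↦ ?_).trans_lt
        (Nat.pow_lt_pow_right hp n.lt_succ_self)
      exact (natDegree_C_mul_X_pow_le _ _).trans (Nat.pow_le_pow_right hp.pos (by lia))
  have hzero : G = 0 := by
    refine eq_zero_of_natDegree_lt_card_of_eval_eq_zero' G (Set.toFinite (W : Set K)).toFinset
      (fun w hw ↦ ?_) ?_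
    · simpa [G, eval_finsetSum, addPoly_apply] using hc w (by simpa using hw)
    · rw [← Set.ncard_eq_toFinset_card (W : Set K)]
      exact hdeg.trans_le hW
  ext i
  have hcoeff : G.coeff (p ^ (i : ℕ)) = c i := by
    simp [G, coeff_X_pow, Nat.pow_right_inj hp, Fin.val_inj]
  rw [← hcoeff, hzero, coeff_zero, Pi.zero_apply]

lemma eq_of_mem_addPolys (hW : p ^ n ≤ Nat.card W) {g g' : K →ₗ[h.fixedField] K}
    (hg : g ∈ addPolys h n) (hg' : g' ∈ addPolys h n) (heq : ∀ w ∈ W, g w = g' w) : g = g' := by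
  obtain ⟨c, rfl⟩ := hg
  obtain ⟨c', rfl⟩ := hg'
  have hsub : c - c' = 0 := eq_zero_of_addPoly_eq_zero hW fun w hw ↦ by
    rw [map_sub, LinearMap.sub_apply, heq w hw, sub_self]
  rw [sub_eq_zero.mp hsub]

lemma surjective_of_injective_of_finrank_eq {k V : Type*} [Field k] [AddCommGroup V] [Module k V]
    [Module.Finite k V] [Algebra k K] (hV : Module.finrank k V = n)
    {T : (Fin n → K) →ₗ[K] V →ₗ[k] K} (hT : Function.Injective T) : Function.Surjective T := by
  refine (LinearMap.injective_iff_surjective_of_finrank_eq_finrank ?_).mp hT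
  rw [Module.finrank_linearMap_self, Module.finrank_fin_fun, hV]

lemma exists_mem_addPolys_extending (hP : Nat.card h.fixedField = p) (hW : Nat.card W = p ^ n)
    (φ : W →ₗ[h.fixedField] K) : ∃ g ∈ addPolys h n, ∀ w : W, g w = φ w := by
  have : Finite W := Nat.finite_of_card_ne_zero (hW ▸ pow_ne_zero n h.ne_zero)
  let restrict : (Fin n → K) →ₗ[K] W →ₗ[h.fixedField] K :=
    LinearMap.lcomp K K W.subtype ∘ₗ addPoly h n
  have hfinrank := h.finrank_eq_of_natCard_eq hP hW
  have hinj : Function.Injective restrict := by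
    refine (injective_iff_map_eq_zero restrict).mpr fun c hc ↦ ?_
    exact eq_zero_of_addPoly_eq_zero hW.ge fun w hw ↦ LinearMap.congr_fun hc ⟨w, hw⟩
  obtain ⟨c, hc⟩ := surjective_of_injective_of_finrank_eq hfinrank hinj φ
  exact ⟨addPoly h n c, ⟨c, rfl⟩, fun w ↦ LinearMap.congr_fun hc w⟩

lemma apply_pow_of_mem_addPolys (hW : p ^ n ≤ Nat.card W) {s : ℕ}
    (hfix : ∀ w ∈ W, w ^ p ^ s = w) {g : K →ₗ[h.fixedField] K} (hg : g ∈ addPolys h n)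
    (hgW : ∀ w ∈ W, g w ^ p ^ s = g w) (x : K) : g x ^ p ^ s = g (x ^ p ^ s) := by
  obtain ⟨c, rfl⟩ := hg
  rw [addPoly_pow]
  refine LinearMap.congr_fun (eq_of_mem_addPolys hW ⟨_, rfl⟩ ⟨c, rfl⟩ fun w hw ↦ ?_) _
  rw [← hgW w hw, addPoly_pow, hfix w hw]

end Restriction

end AdditivePolynomials

section BilinearExtension

variable {K : Type*} [Field K] {p n s : ℕ} {h : IsCharPower p K} {W : Submodule h.fixedField K}

lemma powLinear_notMem_addPolys (hK : p ^ (n + 1) ≤ Nat.card K) :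
    powLinear h n ∉ addPolys h n := by
  rintro ⟨c, hc⟩
  have hzero := eq_zero_of_addPoly_eq_zero (W := (⊤ : Submodule h.fixedField K))
    (c := Fin.snoc (-c) 1) (by simpa using hK) fun x _ ↦ by
      have hx := LinearMap.congr_fun hc x
      rw [addPoly_apply, powLinear_apply] at hx
      simp [addPoly_apply, Fin.sum_univ_castSucc, hx]
  simpa using congrFun hzero (Fin.last n)

lemma ker_eq_of_mem_addPolys [Finite K] (hP : Nat.card h.fixedField = p) (hW : Nat.card W = p ^ n)
    {F : K →ₗ[h.fixedField] K} (hF : F ∈ addPolys h (n + 1)) (hF0 : F ≠ 0)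
    (hFW : W ≤ LinearMap.ker F) : LinearMap.ker F = W := by
  refine (Submodule.eq_of_le_of_finrank_le hFW ?_).symm
  have hcardF := Module.natCard_eq_pow_finrank (K := h.fixedField) (V := LinearMap.ker F)
  rw [hP] at hcardF
  rw [h.finrank_eq_of_natCard_eq hP hW]
  by_contra! hlt
  refine hF0 (eq_of_mem_addPolys ?_ hF (Submodule.zero_mem _) fun w ↦ LinearMap.mem_ker.mp)
  exact hcardF ▸ Nat.pow_le_pow_right h.one_lt.le hlt

/-- `F` is the additive polynomial with zero set `W`, made monic. -/
lemma exists_monic_addPoly_ker_eq [Finite K] (hP : Nat.card h.fixedField = p)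
    (hW : Nat.card W = p ^ n) (hfix : ∀ w ∈ W, w ^ p ^ s = w) (hK : p ^ (n + 1) ≤ Nat.card K) :
    ∃ F : K →ₗ[h.fixedField] K, powLinear h n - F ∈ addPolys h n ∧ LinearMap.ker F = W ∧
      ∀ x, F x ^ p ^ s = F (x ^ p ^ s) := by
  obtain ⟨G, hG, hGW⟩ := exists_mem_addPolys_extending hP hW (powLinear h n ∘ₗ W.subtype)
  have hGpow (x : K) : G x ^ p ^ s = G (x ^ p ^ s) := by
    refine apply_pow_of_mem_addPolys hW.ge hfix hG (fun w hw ↦ ?_) x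
    rw [hGW ⟨w, hw⟩, LinearMap.comp_apply, Submodule.subtype_apply, powLinear_apply,
      pow_right_comm, hfix w hw]
  refine ⟨powLinear h n - G, by rwa [sub_sub_cancel], ker_eq_of_mem_addPolys hP hW
    (Submodule.sub_mem _ (powLinear_mem_addPolys n.lt_succ_self) (addPolys_mono n.le_succ hG)) ?_
    fun w hw ↦ ?_, fun x ↦ ?_⟩
  · exact fun hzero ↦ powLinear_notMem_addPolys hK (sub_eq_zero.mp hzero ▸ hG)
  · exact sub_eq_zero.mpr (hGW ⟨w, hw⟩).symm
  · rw [LinearMap.sub_apply, h.sub_pow, hGpow, LinearMap.sub_apply, powLinear_apply,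
      powLinear_apply, pow_right_comm]

lemma exists_eq_smul_of_eq_zero (hW : p ^ n ≤ Nat.card W) {F g : K →ₗ[h.fixedField] K}
    (hF : powLinear h n - F ∈ addPolys h n) (hFW : W ≤ LinearMap.ker F)
    (hg : g ∈ addPolys h (n + 1)) (hgW : ∀ w ∈ W, g w = 0) : ∃ c : K, g = c • F := by
  obtain ⟨c, hc⟩ := mem_addPolys_succ hg
  refine ⟨c, sub_eq_zero.mp ?_⟩
  have hmem : g - c • F ∈ addPolys h n := by
    convert Submodule.add_mem _ hc (Submodule.smul_mem _ c hF) using 1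
    rw [smul_sub]
    abel
  exact eq_of_mem_addPolys hW hmem (Submodule.zero_mem _) fun w hw ↦ by
    simp [hgW w hw, LinearMap.mem_ker.mp (hFW hw)]

section Symmetric

variable {B : K →ₗ[h.fixedField] K →ₗ[h.fixedField] K}

lemma comm_of_mem_addPolys (hW : p ^ n ≤ Nat.card W) (hleft : ∀ y, B.flip y ∈ addPolys h n)
    (hright : ∀ x, B x ∈ addPolys h n) (hcomm : ∀ v ∈ W, ∀ w ∈ W, B v w = B w v) (x y : K) :
    B x y = B y x := by
  have comm_mem (w : K) (hw : w ∈ W) : B w = B.flip w :=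
    eq_of_mem_addPolys hW (hright w) (hleft w) fun v hv ↦ hcomm w hw v hv
  refine LinearMap.congr_fun (eq_of_mem_addPolys hW (hright x) (hleft x) fun w hw ↦ ?_) y
  exact (LinearMap.congr_fun (comm_mem w hw) x).symm

lemma exists_eq_mul_apply_mul_apply (hW : p ^ n ≤ Nat.card W) {F : K →ₗ[h.fixedField] K}
    (hF : powLinear h n - F ∈ addPolys h n) (hFW : W ≤ LinearMap.ker F) (hF0 : F ≠ 0)
    (hFpow : ∀ x, F x ^ p ^ s = F (x ^ p ^ s)) (hB : ∀ x, B x ∈ addPolys h (n + 1))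
    (hcomm : ∀ x y, B x y = B y x) (hBW : ∀ x, ∀ w ∈ W, B x w = 0)
    (hBpow : ∀ x y, B x y ^ p ^ s = B (x ^ p ^ s) (y ^ p ^ s)) :
    ∃ γ : K, γ ^ p ^ s = γ ∧ ∀ x y, B x y = γ * (F x * F y) := by
  choose c hc using fun x ↦ exists_eq_smul_of_eq_zero hW hF hFW (hB x) (hBW x)
  have hBc (x y : K) : B x y = c x * F y := by rw [hc x, LinearMap.smul_apply, smul_eq_mul]
  obtain ⟨z, hz⟩ : ∃ z, F z ≠ 0 := by
    by_contra! hzero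
    exact hF0 (LinearMap.ext hzero)
  have hBγ (x y : K) : B x y = c z / F z * (F x * F y) := by
    have hcx : c x * F z = c z * F x := by rw [← hBc, ← hBc, hcomm]
    rw [hBc]
    field_simp
    linear_combination F y * hcx
  refine ⟨c z / F z, ?_, hBγ⟩
  have hzpow := hBpow z z
  rw [hBγ, hBγ, ← hFpow, mul_pow, mul_pow] at hzpow
  have hz' : F z ^ p ^ s ≠ 0 := pow_ne_zero _ hz
  exact mul_right_cancel₀ (mul_ne_zero hz' hz') hzpow

end Symmetric

lemma exists_interpolation (hP : Nat.card h.fixedField = p) (hW : Nat.card W = p ^ n)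
    (hfix : ∀ w ∈ W, w ^ p ^ s = w) :
    ∃ (b : Fin n → K) (E : Fin n → K →ₗ[h.fixedField] K), (∀ j, b j ∈ W) ∧
      (∀ j, E j ∈ addPolys h n) ∧ (∀ j x, E j x ^ p ^ s = E j (x ^ p ^ s)) ∧
      ∀ g : K →ₗ[h.fixedField] K, ∀ w ∈ W, g w = ∑ j, g (b j) * E j w := by
  have : Finite W := Nat.finite_of_card_ne_zero (hW ▸ pow_ne_zero n h.ne_zero)
  have : Module.Free h.fixedField W := Module.Free.of_divisionRing _ _
  let b := Module.finBasisOfFinrankEq h.fixedField W (h.finrank_eq_of_natCard_eq hP hW)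
  choose E hE hEW using fun j ↦ exists_mem_addPolys_extending hP hW
    (Algebra.linearMap h.fixedField K ∘ₗ b.coord j)
  have hEW' (j) (w : W) : E j w = (b.repr w j : K) := hEW j w
  refine ⟨fun j ↦ b j, E, fun j ↦ (b j).2, hE, fun j ↦ ?_, fun g w hw ↦ ?_⟩
  · refine apply_pow_of_mem_addPolys hW.ge hfix (hE j) fun w hw ↦ ?_
    rw [hEW' j ⟨w, hw⟩]
    exact pow_pow_eq_self (h.coe_fixedField_pow _) s
  · have hrepr := congrArg (g ∘ₗ W.subtype) (b.sum_repr ⟨w, hw⟩)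
    rw [map_sum] at hrepr
    refine hrepr.symm.trans (Finset.sum_congr rfl fun j _ ↦ ?_)
    rw [map_smul, hEW' j ⟨w, hw⟩, Subfield.smul_def, smul_eq_mul, mul_comm]
    rfl

lemma exists_symmetric_extension (hP : Nat.card h.fixedField = p) (hW : Nat.card W = p ^ n)
    (hfix : ∀ w ∈ W, w ^ p ^ s = w) {β : K →ₗ[h.fixedField] K →ₗ[h.fixedField] K}
    (hβ : ∀ y, β.flip y ∈ addPolys h n) (hcomm : ∀ v ∈ W, ∀ w ∈ W, β v w = β w v)
    (hβpow : ∀ x, ∀ w ∈ W, β x w ^ p ^ s = β (x ^ p ^ s) w) :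
    ∃ Φ : K →ₗ[h.fixedField] K →ₗ[h.fixedField] K, (∀ x, Φ x ∈ addPolys h n) ∧
      (∀ x y, Φ x y = Φ y x) ∧ (∀ x, ∀ w ∈ W, Φ x w = β x w) ∧
      ∀ x y, Φ x y ^ p ^ s = Φ (x ^ p ^ s) (y ^ p ^ s) := by
  obtain ⟨b, E, hb, hE, hEpow, hinterp⟩ := exists_interpolation hP hW hfix
  let Φ : K →ₗ[h.fixedField] K →ₗ[h.fixedField] K :=
    ∑ j, (LinearMap.mul h.fixedField K).compl₁₂ (β.flip (b j)) (E j)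
  have hΦ (x y : K) : Φ x y = ∑ j, β x (b j) * E j y := by simp [Φ]
  have hright (x : K) : Φ x ∈ addPolys h n := by
    have : Φ x = ∑ j, β x (b j) • E j := LinearMap.ext fun y ↦ by simp [hΦ]
    exact this ▸ Submodule.sum_mem _ fun j _ ↦ Submodule.smul_mem _ _ (hE j)
  have hleft (y : K) : Φ.flip y ∈ addPolys h n := by
    have : Φ.flip y = ∑ j, E j y • β.flip (b j) := LinearMap.ext fun x ↦ by simp [hΦ, mul_comm]
    exact this ▸ Submodule.sum_mem _ fun j _ ↦ Submodule.smul_mem _ _ (hβ _)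
  have hΦW (x w : K) (hw : w ∈ W) : Φ x w = β x w := (hΦ x w).trans (hinterp (β x) w hw).symm
  refine ⟨Φ, hright, comm_of_mem_addPolys hW.ge hleft hright fun v hv w hw ↦ ?_, hΦW,
    fun x y ↦ ?_⟩
  · rw [hΦW v w hw, hΦW w v hv, hcomm v hv w hw]
  · simp only [hΦ, h.sum_pow, mul_pow, hEpow, hβpow _ _ (hb _)]

end BilinearExtension

section GaussSum

variable {k : Type*} [Field k] {Q : ℕ}

lemma two_ne_zero_of_mod_four_eq_one (h : IsCharPower Q k) (hQ : Q % 4 = 1) : (2 : k) ≠ 0 := by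
  intro htwo
  have hcast : ((4 * (Q / 4) + 1 : ℕ) : k) = 0 := by
    rw [← hQ, Nat.div_add_mod, h.cast_eq_zero]
  push_cast at hcast
  refine one_ne_zero (α := k) ?_
  linear_combination hcast - 2 * (Q / 4 : ℕ) * htwo

variable (h : IsCharPower Q k) (hcard : Nat.card k = Q ^ 2) (hQ : Q % 4 = 1)
include h hcard hQ

lemma frobTrace_two_sq_eq_zero_iff [Finite k] {u : k} : frobTrace Q 2 (u ^ 2) = 0 ↔ u = 0 := by
  have htrace : frobTrace Q 2 (u ^ 2) = u ^ 2 + (u ^ 2) ^ Q := by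
    simp [frobTrace, Finset.sum_range_succ]
  rw [htrace]
  refine ⟨fun hu ↦ ?_, fun hu ↦ by simp [hu, h.ne_zero]⟩
  obtain ⟨r, rfl⟩ : ∃ r, Q = 4 * r + 1 := ⟨Q / 4, by lia⟩
  have hneg : (u ^ 2) ^ (4 * r + 1) = -u ^ 2 := eq_neg_of_add_eq_zero_right hu
  have htwo : 2 * (u * u ^ (4 * r + 1)) = 0 := calc
    2 * (u * u ^ (4 * r + 1)) = u ^ (4 * r + 1) ^ 2 * u ^ (4 * r + 1) + u ^ (4 * r + 2) := by
      rw [pow_card_pow_eq_self hcard]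
      ring
    _ = ((u ^ 2) ^ (4 * r + 1)) ^ (2 * r + 1) + u ^ (4 * r + 2) := by ring
    _ = 0 := by
      rw [hneg, Odd.neg_pow ⟨r, rfl⟩]
      ring
  simpa using (mul_eq_zero.mp htwo).resolve_left (two_ne_zero_of_mod_four_eq_one h hQ)

lemma isSquare_of_pow_eq_self [Finite k] {l : k} (hl : l ^ Q = l) : IsSquare l := by
  have := Fintype.ofFinite k
  obtain rfl | hl0 := eq_or_ne l 0
  · exact IsSquare.zero
  have hone : l ^ (Q - 1) = 1 := by
    refine mul_right_cancel₀ hl0 ?_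
    rw [← pow_succ, Nat.sub_add_cancel h.one_lt.le, hl, one_mul]
  have hchar : ringChar k ≠ 2 := fun h2 ↦ two_ne_zero_of_mod_four_eq_one h hQ (by
    exact_mod_cast (ringChar.spec k 2).mpr h2.dvd)
  have hhalf : Fintype.card k / 2 = (Q - 1) * (Q / 2 + 1) := by
    rw [← Nat.card_eq_fintype_card, hcard]
    obtain ⟨r, rfl⟩ : ∃ r, Q = 4 * r + 1 := ⟨Q / 4, by lia⟩
    have hr : (4 * r + 1) / 2 = 2 * r := by lia
    rw [hr, Nat.add_sub_cancel, Nat.div_eq_of_lt_le] <;> nlinarith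
  rw [FiniteField.isSquare_iff hchar hl0, hhalf, pow_mul, hone, one_pow]

/-- All elements of the subfield of order `Q` are squares, so the sums of `ψ (l * u ^ 2)` over `u`
agree for `l ≠ 0` in this subfield; summing over `l` first evaluates them. -/
lemma IsInvariantChar.sum_sq [Fintype k] {ψ : AddChar k ℂ} (hψ : IsInvariantChar Q ψ) :
    ∑ u, ψ (u ^ 2) = -Q := by
  classical
  have := Fintype.ofFinite h.fixedField
  have hscale (l : h.fixedField) (hl : l ≠ 0) : ∑ u, ψ (l * u ^ 2) = ∑ u, ψ (u ^ 2) := by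
    obtain ⟨d, hd⟩ := isSquare_of_pow_eq_self h hcard hQ (h.coe_fixedField_pow l)
    have hd0 : d ≠ 0 := by
      rintro rfl
      exact hl (by simpa using hd)
    refine Fintype.sum_equiv (Equiv.mulLeft₀ d hd0) _ _ fun u ↦ ?_
    rw [hd, ← sq, ← mul_pow, Equiv.mulLeft₀_apply]
  have hdouble : ∑ u, ∑ l : h.fixedField, ψ (l * u ^ 2) = Q := by
    simp [hψ.sum_fixedField_mul h hcard, frobTrace_two_sq_eq_zero_iff h hcard hQ]
  rw [Finset.sum_comm, Fintype.sum_eq_add_sum_compl (0 : h.fixedField),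
    Finset.sum_congr rfl fun l hl ↦ hscale l (by simpa using hl)] at hdouble
  simp only [ZeroMemClass.coe_zero, zero_mul, AddChar.map_zero_eq_one, sum_const, card_univ,
    ← Nat.card_eq_fintype_card, hcard, card_compl, card_singleton,
    h.natCard_fixedField hcard, nsmul_eq_mul, mul_one, Nat.cast_pow,
    Nat.cast_sub h.one_lt.le, Nat.cast_one] at hdouble
  have hQ1 : (Q - 1 : ℂ) ≠ 0 := sub_ne_zero.mpr (by exact_mod_cast h.one_lt.ne')
  exact mul_left_cancel₀ hQ1 (by linear_combination hdouble)

end GaussSum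

section Polarization

variable {k : Type*} [Field k] {p e : ℕ} {α : ℕ → k} {h : IsCharPower p k}

lemma rLinear_mem_addPolys : rLinear h e α ∈ addPolys h (e + 1) :=
  ⟨fun i ↦ α i, LinearMap.ext fun x ↦ by
    rw [addPoly_apply, rLinear_apply, Rgen, Finset.sum_range]⟩

lemma flip_fBilin_mem_addPolys (y : k) : (fBilin h e α).flip y ∈ addPolys h e := by
  have hterm : (fBilin h e α).flip y = -∑ i ∈ range e, (∑ j ∈ range (e - i),
      (α i * y) ^ p ^ j • powLinear h (i + j) + Rgen p e α y ^ p ^ i • powLinear h i) := by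
    ext x
    simp only [LinearMap.flip_apply, fBilin_apply, fgen, LinearMap.neg_apply, LinearMap.sum_apply,
      LinearMap.add_apply, LinearMap.smul_apply, powLinear_apply, smul_eq_mul, mul_pow,
      ← pow_mul, ← pow_add]
    congr 1
    refine Finset.sum_congr rfl fun i _ ↦ congrArg₂ _ (Finset.sum_congr rfl fun j _ ↦ ?_) ?_
    · rw [mul_right_comm]
    · exact mul_comm _ _
  rw [hterm]
  refine Submodule.neg_mem _ (Submodule.sum_mem _ fun i hi ↦ Submodule.add_mem _
    (Submodule.sum_mem _ fun j hj ↦ ?_) ?_) <;>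
  refine Submodule.smul_mem _ _ (powLinear_mem_addPolys ?_) <;>
  simp only [mem_range] at * <;> lia

variable [Finite k] {s : ℕ} {W : Submodule h.fixedField k}

lemma IsIsotropic.exists_polarization_eq (hW : IsIsotropic h e α W)
    (hP : Nat.card h.fixedField = p) (hcard : Nat.card W = p ^ e)
    (hfix : ∀ w ∈ W, w ^ p ^ s = w) (hα : ∀ i, α i ^ p ^ s = α i)
    (hk : p ^ (e + 1) ≤ Nat.card k) :
    ∃ (γ : k) (F : k →ₗ[h.fixedField] k) (Φ : k →ₗ[h.fixedField] k →ₗ[h.fixedField] k),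
      γ ^ p ^ s = γ ∧ LinearMap.ker F = W ∧ (∀ x, F x ^ p ^ s = F (x ^ p ^ s)) ∧
      ∀ x y, x * Rgen p e α y + y * Rgen p e α x = γ * (F x * F y) + (Φ x y ^ p - Φ x y) := by
  obtain ⟨F, hF, hFW, hFpow⟩ := exists_monic_addPoly_ker_eq hP hcard hfix hk
  obtain ⟨Φ, hΦ, hΦcomm, hΦW, hΦpow⟩ := exists_symmetric_extension hP hcard hfix
    (β := fBilin h e α) flip_fBilin_mem_addPolys hW.fgen_comm fun x w hw ↦ by
      rw [fBilin_apply, fgen_pow h s hα, hfix w hw, fBilin_apply]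
  have hF0 : F ≠ 0 := by
    rintro rfl
    exact powLinear_notMem_addPolys hk (by rwa [sub_zero] at hF)
  let M := (LinearMap.mul h.fixedField k).compl₂ (rLinear h e α)
  let B : k →ₗ[h.fixedField] k →ₗ[h.fixedField] k := M + M.flip - Φ.compr₂ (powLinear h 1) + Φ
  have hB (x y : k) :
      B x y = x * Rgen p e α y + y * Rgen p e α x - Φ x y ^ p + Φ x y := by
    simp [B, M, rLinear_apply, powLinear_apply]
  have hBmem (x : k) : B x ∈ addPolys h (e + 1) := by
    have hBx : B x =
        x • rLinear h e α + Rgen p e α x • powLinear h 0 - powLinear h 1 ∘ₗ Φ x + Φ x := by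
      ext y
      simp [hB, rLinear_apply, powLinear_apply, mul_comm]
    rw [hBx]
    exact Submodule.add_mem _ (Submodule.sub_mem _ (Submodule.add_mem _
      (Submodule.smul_mem _ _ rLinear_mem_addPolys)
      (Submodule.smul_mem _ _ (powLinear_mem_addPolys e.succ_pos)))
      (powLinear_comp_mem_addPolys (hΦ x) 1)) (addPolys_mono e.le_succ (hΦ x))
  have hBcomm (x y : k) : B x y = B y x := by
    rw [hB, hB, hΦcomm x y]
    ring
  have hBW (x w : k) (hw : w ∈ W) : B x w = 0 := by
    have hf := fgen_pow_sub (α := α) (e := e) h x w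
    rw [hW.Egen_eq_zero w hw] at hf
    rw [hB, hΦW x w hw, fBilin_apply]
    linear_combination -hf
  obtain ⟨γ, hγ, hBγ⟩ := exists_eq_mul_apply_mul_apply hcard.ge hF hFW.ge hF0 hFpow hBmem hBcomm
    hBW fun x y ↦ by
      simp only [hB, h.sub_pow, h.add_pow, mul_pow, Rgen_pow h s hα, pow_right_comm _ p, hΦpow]
  refine ⟨γ, F, Φ, hγ, hFW, hFpow, fun x y ↦ ?_⟩
  rw [← hBγ, hB]
  ring

end Polarization

section CommutingMaps

variable {K V : Type*} [Field K] [AddCommGroup V] [Module K V] [FiniteDimensional K V]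

lemma finrank_comap_eq (f : V →ₗ[K] V) (N : Submodule K V) :
    Module.finrank K (N.comap f) =
      Module.finrank K (LinearMap.range f ⊓ N : Submodule K V) +
        Module.finrank K (LinearMap.ker f) := by
  have hrank := (f.domRestrict (N.comap f)).finrank_range_add_finrank_ker
  have hle : LinearMap.ker f ≤ N.comap f := LinearMap.ker_le_comap f
  rw [LinearMap.range_domRestrict, Submodule.map_comap_eq, LinearMap.ker_domRestrict,
    (Submodule.comapSubtypeEquivOfLe hle).finrank_eq] at hrank
  exact hrank.symm

lemma ker_le_range_of_commute {f g : V →ₗ[K] V} (hfg : f ∘ₗ g = g ∘ₗ f)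
    (hle : LinearMap.ker f ≤ LinearMap.range g) : LinearMap.ker g ≤ LinearMap.range f := by
  have hker : (LinearMap.ker g).comap f = (LinearMap.ker f).comap g := by
    rw [← LinearMap.ker_comp, ← LinearMap.ker_comp, hfg]
  have hrank := finrank_comap_eq f (LinearMap.ker g)
  rw [hker, finrank_comap_eq, inf_eq_right.mpr hle] at hrank
  exact inf_eq_right.mp (Submodule.eq_of_le_of_finrank_eq inf_le_right (by lia))

end CommutingMaps

lemma sum_comp_addMonoidHom {G H : Type*} [AddGroup G] [AddGroup H] [Fintype G] [Fintype H]
    (f : G →+ H) [DecidablePred (· ∈ f.range)] (g : H → ℂ) :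
    ∑ x, g (f x) = Nat.card f.ker * ∑ y with y ∈ f.range, g y := by
  classical
  have himage : univ.image f = univ.filter (· ∈ f.range) := by
    ext
    simp
  have hker : #{x | f x = 0} = Nat.card f.ker := by
    rw [← Nat.subtype_card (p := (· ∈ f.ker)) _ fun x ↦ by simp [AddMonoidHom.mem_ker]]
  rw [Finset.sum_comp, himage, Finset.mul_sum]
  refine Finset.sum_congr rfl fun y hy ↦ ?_
  rw [AddMonoidHom.card_fiber_eq_of_mem_range f (mem_filter.mp hy).2 (zero_mem f.range), hker,
    nsmul_eq_mul]

section OddSum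

lemma IsCharPower.two_pow_self {A : Type*} [CommRing A] {q : ℕ} (h : IsCharPower q A) :
    (2 : A) ^ q = 2 := by
  rw [← one_add_one_eq_two, h.add_pow_self, one_pow]

variable {k : Type*} [Field k] {q m : ℕ}

lemma frobTrace_eq_zero_of_pow_eq_self (hm : (m : k) = 0) {l : k} (hl : l ^ q = l) :
    frobTrace q m l = 0 := by
  simp [frobTrace, pow_pow_eq_self hl, hm]

variable [Fintype k] (h : IsCharPower q k) (hcard : Nat.card k = q ^ m) (hm : (m : k) = 0)
include h hcard hm

/-- Averaging over translations by the fixed field, on which `ψ (l ^ 2) = 1`, leaves only the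
kernel of the trace. -/
lemma IsInvariantChar.sum_sq_mem_eq [DecidableEq k] {ψ : AddChar k ℂ} (hψ : IsInvariantChar q ψ)
    (h2 : (2 : k) ≠ 0) {I : AddSubgroup k} [DecidablePred (· ∈ I)]
    (hI : ∀ u, frobTrace q m u = 0 → u ∈ I) :
    ∑ u with u ∈ I, ψ (u ^ 2) = ∑ u with frobTrace q m u = 0, ψ (u ^ 2) := by
  have := Fintype.ofFinite h.fixedField
  have hcardP : Fintype.card h.fixedField = q := by
    rw [← Nat.card_eq_fintype_card, h.natCard_fixedField hcard]
  have hmem (l : h.fixedField) : (l : k) ∈ I :=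
    hI l (frobTrace_eq_zero_of_pow_eq_self hm (h.coe_fixedField_pow l))
  have hexpand (u : k) (l : h.fixedField) :
      ψ ((u + l) ^ 2) = ψ (u ^ 2) * ψ (l * (2 * u)) := by
    have hl : ((l : k) ^ 2) ^ q = (l : k) ^ 2 := by rw [pow_right_comm, h.coe_fixedField_pow]
    rw [← mul_one (ψ (u ^ 2) * _),
      ← hψ.apply_eq_one h hcard (frobTrace_eq_zero_of_pow_eq_self hm hl), ← AddChar.map_add_eq_mul,
      ← AddChar.map_add_eq_mul]
    ring_nf
  have htranslate (l : h.fixedField) :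
      ∑ u with u ∈ I, ψ ((u + l) ^ 2) = ∑ u with u ∈ I, ψ (u ^ 2) :=
    sum_equiv (Equiv.addRight (l : k)) (by simp [I.add_mem_cancel_right (hmem l)]) fun _ _ ↦ rfl
  have hrow (u : k) : ∑ l : h.fixedField, ψ (l * (2 * u)) =
      if frobTrace q m u = 0 then (q : ℂ) else 0 := by
    simp [hψ.sum_fixedField_mul h hcard, frobTrace_mul_left h.two_pow_self, h2]
  refine mul_left_cancel₀ (Nat.cast_ne_zero.mpr h.ne_zero : (q : ℂ) ≠ 0) ?_
  calc (q : ℂ) * ∑ u with u ∈ I, ψ (u ^ 2)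
      = ∑ l : h.fixedField, ∑ u with u ∈ I, ψ ((u + l) ^ 2) := by simp [htranslate, hcardP]
    _ = ∑ u with u ∈ I, ψ (u ^ 2) * ∑ l : h.fixedField, ψ (l * (2 * u)) := by
        simp only [hexpand, mul_sum]
        exact sum_comm
    _ = q * ∑ u with frobTrace q m u = 0, ψ (u ^ 2) := by
        simp only [hrow, mul_ite, mul_zero, ← sum_filter, filter_filter,
          and_iff_right_of_imp (hI _), ← sum_mul]
        exact mul_comm _ _

lemma IsInvariantChar.sum_sq_mem_eq_sum {ψ : AddChar k ℂ}
    (hψ : IsInvariantChar q ψ) (h2 : (2 : k) ≠ 0) {I : AddSubgroup k} [DecidablePred (· ∈ I)]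
    (hI : ∀ u, frobTrace q m u = 0 → u ∈ I) :
    ∑ u with u ∈ I, ψ (u ^ 2) = ∑ u, ψ (u ^ 2) := by
  classical
  rw [hψ.sum_sq_mem_eq h hcard hm h2 hI,
    ← hψ.sum_sq_mem_eq h hcard hm h2 (I := ⊤) fun u _ ↦ AddSubgroup.mem_top u]
  simp

end OddSum

section CommutingWithFrobenius

variable {k : Type*} [Field k] {p s m : ℕ} (h : IsCharPower p k) (hs : s ≠ 0)
  (hcard : Nat.card k = (p ^ s) ^ m) {F : k →ₗ[h.fixedField] k}
  (hF : ∀ x, F x ^ p ^ s = F (x ^ p ^ s)) (hker : ∀ x ∈ LinearMap.ker F, x ^ p ^ s = x)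
include hs hcard hF hker

lemma mem_range_of_frobTrace_eq_zero [Finite k] {u : k} (hu : frobTrace (p ^ s) m u = 0) :
    u ∈ LinearMap.range F := by
  let T : k →ₗ[h.fixedField] k := ∑ i ∈ range m, powLinear h (s * i)
  have hT (x : k) : T x = frobTrace (p ^ s) m x := by
    simp [T, frobTrace, powLinear_apply, pow_mul]
  refine ker_le_range_of_commute (g := T) (LinearMap.ext fun x ↦ ?_) (fun x hx ↦ ?_)
    (LinearMap.mem_ker.mpr ((hT u).trans hu))
  · have hFpow (i : ℕ) : F (x ^ (p ^ s) ^ i) = F x ^ (p ^ s) ^ i := by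
      induction i with
      | zero => simp
      | succ i ih => rw [pow_succ, pow_mul, ← hF, ih, ← pow_mul]
    simp only [LinearMap.comp_apply, hT, frobTrace, map_sum, hFpow]
  · have hx' : x ∈ (h.pow hs).fixedField := (h.pow hs).mem_fixedField.mpr (hker x hx)
    obtain ⟨z, hz⟩ := Algebra.trace_surjective (h.pow hs).fixedField k ⟨x, hx'⟩
    exact ⟨z, by rw [hT, ← (h.pow hs).coe_trace_fixedField hcard, hz]⟩

lemma IsInvariantChar.sum_apply_sq [Fintype k] (hm : (m : k) = 0) (h2 : (2 : k) ≠ 0)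
    {ψ : AddChar k ℂ} (hψ : IsInvariantChar (p ^ s) ψ) :
    ∑ x, ψ (F x ^ 2) = Nat.card (LinearMap.ker F) * ∑ u, ψ (u ^ 2) := by
  classical
  rw [← hψ.sum_sq_mem_eq_sum (h.pow hs) hcard hm h2 (I := F.toAddMonoidHom.range) fun u ↦
    mem_range_of_frobTrace_eq_zero h hs hcard hF hker]
  exact sum_comp_addMonoidHom F.toAddMonoidHom fun u ↦ ψ (u ^ 2)

end CommutingWithFrobenius

section ExponentialSum

variable {k : Type*} [Field k] {p e : ℕ} {α : ℕ → k} {h : IsCharPower p k} {ψ : AddChar k ℂ}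

lemma IsInvariantChar.apply_pow_sub_self (hψ : IsInvariantChar p ψ) (z : k) :
    ψ (z ^ p - z) = 1 := by
  rw [AddChar.map_sub_eq_div, hψ.apply_pow, div_self (ψ.val_isUnit z).ne_zero]

include h in
lemma IsInvariantChar.apply_polarization (hψ : IsInvariantChar p ψ) (x y : k) :
    ψ (x * Rgen p e α y + y * Rgen p e α x) = ψ (x ^ p ^ e * Egen p e α y) := by
  rw [← one_mul (ψ (x ^ p ^ e * _)), ← hψ.apply_pow_sub_self (fgen p e α x y), fgen_pow_sub h,
    ← AddChar.map_add_eq_mul, sub_add_cancel]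

include h in
lemma IsInvariantChar.exists_apply_polarization_ne_one [Finite k] (hψ : IsInvariantChar p ψ)
    (hα : α e ≠ 0) (hne : e = 0 → (2 : k) ≠ 0) (hk : p ^ (2 * e) < Nat.card k) :
    ∃ x y, ψ (x * Rgen p e α y + y * Rgen p e α x) ≠ 1 := by
  have := Fintype.ofFinite k
  obtain ⟨y, -, hy⟩ := exists_Egen_ne_zero h.one_lt hα hne (s := univ)
    (by rwa [card_univ, ← Nat.card_eq_fintype_card])
  obtain ⟨z, hz⟩ := AddChar.ne_one_iff.mp hψ.ne_one
  obtain ⟨x, hx⟩ := Finite.surjective_of_injective (h.powHom e).injective (z / Egen p e α y)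
  refine ⟨x, y, ?_⟩
  rwa [hψ.apply_polarization (h := h), ← h.powHom_apply, hx, div_mul_cancel₀ _ hy]

/-- Polarizing and halving turns `x * R x` into a multiple of the square `F x ^ 2`, up to elements
on which `ψ` is trivial; the sum then reduces to a quadratic Gauss sum. -/
theorem IsIsotropic.sum_apply_mul_Rgen_of_two_ne_zero [Fintype k] {s r : ℕ}
    {W : Submodule h.fixedField k} (hW : IsIsotropic h e α W) (hcardW : Nat.card W = p ^ e)
    (hs : s ≠ 0) (hfix : ∀ w ∈ W, w ^ p ^ s = w) (hα : ∀ i, α i ^ p ^ s = α i) (hα0 : α e ≠ 0)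
    (h2 : (2 : k) ≠ 0) (hcard : Nat.card k = (p ^ s) ^ (2 * r)) (hr : ((2 * r : ℕ) : k) = 0)
    (hQ : (p ^ s) ^ r % 4 = 1) (hk : p ^ (e + 1) ≤ Nat.card k) (hk' : p ^ (2 * e) < Nat.card k)
    (hψ : IsInvariantChar p ψ) :
    ∑ x, ψ (x * Rgen p e α x) = -(p ^ e * (p ^ s) ^ r) := by
  have hP : Nat.card h.fixedField = p := h.natCard_fixedField (hcard.trans (pow_mul p s _).symm)
  have hr0 : r ≠ 0 := by
    rintro rfl
    have hone : 1 < Nat.card k := Finite.one_lt_card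
    exact absurd hone (by rw [hcard, mul_zero, pow_zero]; exact lt_irrefl 1)
  obtain ⟨γ, F, Φ, hγ, hFW, hFpow, hpolar⟩ := hW.exists_polarization_eq hP hcardW hfix hα hk
  have hγ0 : γ ≠ 0 := by
    rintro rfl
    obtain ⟨x, y, hxy⟩ := hψ.exists_apply_polarization_ne_one (h := h) hα0 (fun _ ↦ h2) hk'
    exact hxy (by rw [hpolar, zero_mul, zero_add, hψ.apply_pow_sub_self])
  have hhalf : (2 : k)⁻¹ ^ p = 2⁻¹ := by rw [inv_pow, h.two_pow_self]
  have hhalf_sub (z : k) : 2⁻¹ * (z ^ p - z) = (2⁻¹ * z) ^ p - 2⁻¹ * z := by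
    rw [mul_pow, hhalf, mul_sub]
  have hsquare (x : k) : x * Rgen p e α x = 2⁻¹ * γ * F x ^ 2 + 2⁻¹ * (Φ x x ^ p - Φ x x) := by
    refine mul_left_cancel₀ h2 ?_
    rw [two_mul, hpolar x x]
    field_simp
  have hc : (2⁻¹ * γ) ^ p ^ s = 2⁻¹ * γ := by rw [mul_pow, hγ, pow_pow_eq_self hhalf]
  have hχ : IsInvariantChar (p ^ s) (ψ.mulShift (2⁻¹ * γ)) :=
    (hψ.pow s).mulShift hc (mul_ne_zero (inv_ne_zero h2) hγ0)
  calc ∑ x, ψ (x * Rgen p e α x) = ∑ x, ψ.mulShift (2⁻¹ * γ) (F x ^ 2) := by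
        simp only [hsquare, hhalf_sub, AddChar.map_add_eq_mul, hψ.apply_pow_sub_self, mul_one,
          AddChar.mulShift_apply]
    _ = p ^ e * ∑ u, ψ.mulShift (2⁻¹ * γ) (u ^ 2) := by
        rw [hχ.sum_apply_sq h hs hcard hFpow (hFW ▸ hfix) hr h2, hFW, hcardW, Nat.cast_pow]
    _ = -(p ^ e * (p ^ s) ^ r) := by
        rw [(hχ.pow r).sum_sq ((h.pow hs).pow hr0) (by rw [hcard, mul_comm, pow_mul]) hQ]
        push_cast
        ring

end ExponentialSum

section CharTwo

variable {k : Type*} [Field k] [CharP k 2] {q : ℕ} {t : k}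

lemma frobTrace_two_eq_zero_iff {z : k} : frobTrace q 2 z = 0 ↔ z ^ q = z := by
  rw [frobTrace, Finset.sum_range_succ, Finset.sum_range_one, pow_zero, pow_one, pow_one,
    CharTwo.add_eq_zero, eq_comm]

lemma addChar_apply_mul_self (ψ : AddChar k ℂ) (z : k) : ψ z * ψ z = 1 := by
  rw [← AddChar.map_add_eq_mul, CharTwo.add_self_eq_zero, AddChar.map_zero_eq_one]

variable [Finite k]

lemma exists_add_pow_eq_one (h : IsCharPower q k) (hcard : Nat.card k = q ^ 2) :
    ∃ t : k, t + t ^ q = 1 := by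
  obtain ⟨t, ht⟩ := exists_pow_sub_self_eq_of_frobTrace_eq_zero h hcard
    (frobTrace_two_eq_zero_iff.mpr (one_pow q))
  exact ⟨t, by rw [← ht, CharTwo.sub_eq_add, add_comm]⟩

lemma bijective_add_mul (h : IsCharPower q k) (hcard : Nat.card k = q ^ 2)
    (ht : t + t ^ q = 1) :
    Function.Bijective fun z : h.fixedField × h.fixedField ↦ (z.1 : k) + t * z.2 := by
  have hsnd (z : h.fixedField × h.fixedField) :
      ((z.1 : k) + t * z.2) + ((z.1 : k) + t * z.2) ^ q = z.2 := by
    rw [h.add_pow_self, mul_pow, h.coe_fixedField_pow, h.coe_fixedField_pow,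
      add_add_add_comm, ← add_mul, ht, one_mul, CharTwo.add_self_eq_zero, zero_add]
  have hinj : Function.Injective fun z : h.fixedField × h.fixedField ↦ (z.1 : k) + t * z.2 := by
    intro z z' (hzz' : (z.1 : k) + t * z.2 = z'.1 + t * z'.2)
    have hsnd_eq : (z.2 : k) = z'.2 := by rw [← hsnd z, hzz', hsnd]
    rw [hsnd_eq] at hzz'
    exact Prod.ext (Subtype.ext (add_right_cancel hzz')) (Subtype.ext hsnd_eq)
  refine hinj.bijective_of_nat_card_le (le_of_eq ?_)
  rw [Nat.card_prod, h.natCard_fixedField hcard, hcard, sq]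

end CharTwo

section SumSquared

variable {k : Type*} [Field k] {p e : ℕ} {α : ℕ → k} {h : IsCharPower p k} {ψ : AddChar k ℂ}
include h

lemma IsInvariantChar.apply_add_mul_Rgen_add (hψ : IsInvariantChar p ψ) (x y : k) :
    ψ ((x + y) * Rgen p e α (x + y)) =
      ψ (x * Rgen p e α x) * ψ (y * Rgen p e α y) * ψ (x ^ p ^ e * Egen p e α y) := by
  rw [← hψ.apply_polarization (h := h), ← AddChar.map_add_eq_mul, ← AddChar.map_add_eq_mul,
    Rgen_add h]
  ring_nf

variable [Fintype k] [DecidableEq k]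

lemma IsInvariantChar.sum_apply_pow_mul (hψ : IsInvariantChar p ψ) (i : ℕ) (c : k) :
    ∑ x, ψ (x ^ p ^ i * c) = if c = 0 then (Fintype.card k : ℂ) else 0 := by
  have hbij : Function.Bijective (· ^ p ^ i : k → k) :=
    Finite.injective_iff_bijective.mp (h.powHom i).injective
  rw [hbij.sum_comp fun y ↦ ψ (y * c)]
  exact_mod_cast AddChar.sum_mulShift c (AddChar.IsPrimitive.of_ne_one hψ.ne_one)

lemma IsInvariantChar.sum_apply_mul_Rgen_sq [CharP k 2] (hψ : IsInvariantChar p ψ)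
    (hker : ∀ v, Egen p e α v = 0 → ψ (v * Rgen p e α v) = 1) :
    (∑ x, ψ (x * Rgen p e α x)) ^ 2 = Fintype.card k * #{v : k | Egen p e α v = 0} := by
  calc (∑ x, ψ (x * Rgen p e α x)) ^ 2
      = ∑ x, ∑ y, ψ (x * Rgen p e α x) * ψ ((x + y) * Rgen p e α (x + y)) := by
        rw [sq, Finset.sum_mul_sum]
        exact Finset.sum_congr rfl fun x _ ↦ (Equiv.sum_comp (Equiv.addLeft x) _).symm
    _ = ∑ y, ψ (y * Rgen p e α y) * ∑ x, ψ (x ^ p ^ e * Egen p e α y) := by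
        rw [Finset.sum_comm]
        simp only [hψ.apply_add_mul_Rgen_add (h := h), ← mul_assoc, addChar_apply_mul_self,
          one_mul, ← Finset.mul_sum]
    _ = ∑ y with Egen p e α y = 0, (Fintype.card k : ℂ) := by
        simp only [hψ.sum_apply_pow_mul (h := h), mul_ite, mul_zero, ← Finset.sum_filter]
        exact Finset.sum_congr rfl fun v hv ↦ by
          rw [hker v (by simpa using hv), one_mul]
    _ = Fintype.card k * #{v : k | Egen p e α v = 0} := by
        rw [Finset.sum_const, nsmul_eq_mul, mul_comm]

end SumSquared

section QuadraticExtension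

variable {k : Type*} [Field k] {p e N : ℕ} {α : ℕ → k} {h : IsCharPower p k} {ψ : AddChar k ℂ}
  {t : k} (hα : ∀ i, α i ^ p ^ N = α i) (ht : t + t ^ p ^ N = 1)

include h hα in
lemma mul_Rgen_pow_eq_self {v : k} (hv : v ^ p ^ N = v) :
    (v * Rgen p e α v) ^ p ^ N = v * Rgen p e α v := by
  rw [mul_pow, Rgen_pow h N hα, hv]

variable (hN : N ≠ 0)

lemma IsInvariantChar.sum_fixedField_pow_mul [Finite k] [DecidableEq k] {m : ℕ}
    (hcard : Nat.card k = (p ^ N) ^ m) (hψ : IsInvariantChar p ψ)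
    [Fintype (h.pow hN).fixedField] (i : ℕ) (c : k) :
    ∑ u : (h.pow hN).fixedField, ψ ((u : k) ^ p ^ i * c) =
      if frobTrace (p ^ N) m c = 0 then ((p ^ N : ℕ) : ℂ) else 0 := by
  have hinj : Function.Injective (· ^ p ^ i : (h.pow hN).fixedField → (h.pow hN).fixedField) :=
    fun u v huv ↦ Subtype.ext ((h.powHom i).injective (congrArg Subtype.val huv))
  rw [← (hψ.pow N).sum_fixedField_mul (h.pow hN) hcard c]
  exact (Finite.injective_iff_bijective.mp hinj).sum_comp fun u ↦ ψ ((u : k) * c)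

variable [CharP k 2] (hcard : Nat.card k = (p ^ N) ^ 2)

include h hcard hN in
lemma IsInvariantChar.apply_eq_one_of_pow_eq_self [Finite k] (hψ : IsInvariantChar p ψ) {z : k}
    (hz : z ^ p ^ N = z) : ψ z = 1 :=
  (hψ.pow N).apply_eq_one (h.pow hN) hcard (frobTrace_two_eq_zero_iff.mpr hz)

variable [Fintype k] [DecidableEq k]

include h hα ht hN hcard in
lemma IsInvariantChar.sum_apply_mul_Rgen_eq_sum_ker (hψ : IsInvariantChar p ψ)
    (hker : ∀ v, Egen p e α v = 0 → v ^ p ^ N = v) :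
    ∑ x, ψ (x * Rgen p e α x) =
      p ^ N * ∑ v with Egen p e α v = 0, ψ (t * v * Rgen p e α (t * v)) := by
  have := Fintype.ofFinite (h.pow hN).fixedField
  let G (v : k) : ℂ := if Egen p e α v = 0 then ψ (t * v * Rgen p e α (t * v)) else 0
  have htrace (v : (h.pow hN).fixedField) :
      frobTrace (p ^ N) 2 (Egen p e α (t * v)) = Egen p e α v := by
    rw [frobTrace, Finset.sum_range_succ, Finset.sum_range_one, pow_zero, pow_one, pow_one,
      Egen_pow h N hα, mul_pow, (h.pow hN).coe_fixedField_pow, ← Egen_add h, ← add_mul, ht,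
      one_mul]
  have hsplit (u v : (h.pow hN).fixedField) :
      ψ (((u : k) + t * v) * Rgen p e α (u + t * v)) =
        ψ (t * v * Rgen p e α (t * v)) * ψ ((u : k) ^ p ^ e * Egen p e α (t * v)) := by
    rw [hψ.apply_add_mul_Rgen_add (h := h), hψ.apply_eq_one_of_pow_eq_self (h := h) hN hcard
      (mul_Rgen_pow_eq_self (h := h) hα ((h.pow hN).coe_fixedField_pow u)), one_mul]
  calc ∑ x, ψ (x * Rgen p e α x)
      = ∑ v : (h.pow hN).fixedField, ∑ u : (h.pow hN).fixedField,
          ψ (((u : k) + t * v) * Rgen p e α (u + t * v)) := by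
        rw [← (bijective_add_mul (h.pow hN) hcard ht).sum_comp, Fintype.sum_prod_type_right]
    _ = p ^ N * ∑ v : (h.pow hN).fixedField, G v := by
        simp only [hsplit, ← Finset.mul_sum, hψ.sum_fixedField_pow_mul (h := h) hN hcard, htrace]
        simp only [G, Finset.mul_sum, ite_mul, zero_mul, mul_ite, mul_zero, Nat.cast_pow, mul_comm]
    _ = p ^ N * ∑ v with Egen p e α v = 0, ψ (t * v * Rgen p e α (t * v)) := by
        rw [← Finset.sum_subtype {v : k | v ^ p ^ N = v}
          (fun v ↦ by rw [mem_filter_univ, (h.pow hN).mem_fixedField]) G,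
          Finset.sum_filter, Finset.sum_filter]
        congr! 2 with v
        by_cases hv : Egen p e α v = 0 <;> simp [G, hv, hker]

end QuadraticExtension

lemma frobTrace_nat_add {A : Type*} [CommRing A] (q m n : ℕ) (z : A) :
    frobTrace q (m + n) z = frobTrace q m z + frobTrace q n (z ^ q ^ m) := by
  simp only [frobTrace, Finset.sum_range_add, pow_add, pow_mul]

lemma frobTrace_two_mul_of_pow_eq_self {A : Type*} [CommRing A] [CharP A 2] {q m : ℕ} {z : A}
    (hz : z ^ q ^ m = z) : frobTrace q (2 * m) z = 0 := by
  rw [two_mul, frobTrace_nat_add, hz, CharTwo.add_self_eq_zero]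

section DiagonalForm

variable {k : Type*} [Field k] {p e : ℕ} {α : ℕ → k} (h : IsCharPower p k)
include h

theorem frobTrace_mul_Rgen_eq_fgen_self [CharP k 2] {M : ℕ} (hα : ∀ i, α i ^ p ^ M = α i) {t : k}
    (ht : t + t ^ p ^ (2 * M) = 1) {v : k} (hv : Egen p e α v = 0) (hvM : v ^ p ^ M = v) :
    frobTrace p (2 * (2 * M)) (t * v * Rgen p e α (t * v)) = fgen p e α v v := by
  have hsq {c : k} (hc : c ^ p ^ M = c) : c ^ p ^ (2 * M) = c := by
    rw [mul_comm, pow_mul, pow_pow_eq_self hc]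
  have hα2 (i : ℕ) : α i ^ p ^ (2 * M) = α i := hsq (hα i)
  have htv : (t * v) ^ p ^ (2 * M) = t * v + v := by
    rw [mul_pow, hsq hvM]
    linear_combination v * ht - v * CharTwo.add_self_eq_zero t
  have hconj : t * v * Rgen p e α (t * v) + (t * v * Rgen p e α (t * v)) ^ p ^ (2 * M) =
      (fgen p e α (t * v) v ^ p - fgen p e α (t * v) v) + v * Rgen p e α v := by
    rw [mul_pow, Rgen_pow h _ hα2, htv, Rgen_add h, fgen_pow_sub h, hv, mul_zero, sub_zero]
    linear_combination CharTwo.add_self_eq_zero (t * v * Rgen p e α (t * v))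
  rw [two_mul, frobTrace_nat_add, ← frobTrace_add h, hconj, frobTrace_add h,
    frobTrace_pow_self_sub h,
    frobTrace_two_mul_of_pow_eq_self (mul_Rgen_pow_eq_self (h := h) hα hvM), add_zero,
    fgen_pow h _ hα2, htv, hsq hvM, fgen_add_left h, add_sub_cancel_left]

lemma exists_fgen_self_ne_zero [CharP k 2] {v x : k} (hv : Egen p e α v = 0) (hv0 : v ≠ 0)
    (hx : Egen p e α x ≠ 0) : ∃ y, fgen p e α y y ≠ 0 := by
  by_contra! hdiag
  refine hv0 (eq_zero_of_forall_fgen_comm h hx hv ?_)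
  have hsum := hdiag (v + x)
  rwa [fgen_add_left h, fgen_add_right h, fgen_add_right h, hdiag, hdiag, zero_add, add_zero,
    CharTwo.add_eq_zero] at hsum

omit h in
lemma X_sq_dvd_fgen (hp : p ≠ 0) : (X ^ 2 : k[X]) ∣ fgen p e (fun i ↦ C (α i)) X X := by
  have hpow (n : ℕ) : (X : k[X]) ∣ X ^ p ^ n := dvd_pow_self _ (pow_ne_zero n hp)
  have hpow_sq {P : k[X]} (n : ℕ) (hP : X ^ 2 ∣ P) : X ^ 2 ∣ P ^ p ^ n :=
    dvd_pow hP (pow_ne_zero n hp)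
  have hR : (X : k[X]) ∣ Rgen p e (fun i ↦ C (α i)) X :=
    Finset.dvd_sum fun i _ ↦ (hpow i).mul_left _
  rw [fgen, dvd_neg]
  refine Finset.dvd_sum fun i _ ↦ dvd_add (Finset.dvd_sum fun j _ ↦ hpow_sq j ?_) (hpow_sq i ?_)
  · exact sq (X : k[X]) ▸ mul_dvd_mul ((hpow i).mul_left _) dvd_rfl
  · exact sq (X : k[X]) ▸ mul_dvd_mul dvd_rfl hR

lemma card_fgen_self_eq_zero_lt [Fintype k] [DecidableEq k] {y : k} (hy : fgen p e α y y ≠ 0) :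
    #{x : k | fgen p e α x x = 0} < p ^ (e - 1) * (1 + p ^ e) := by
  obtain ⟨P, hP⟩ := X_sq_dvd_fgen (e := e) (α := α) h.ne_zero
  have heval (x : k) : x ^ 2 * P.eval x = fgen p e α x x := by
    simpa [hP] using eval_fgen (p := p) (e := e) (α := α) X X x
  have hP0 : P ≠ 0 := by
    rintro rfl
    exact hy (by rw [← heval, eval_zero, mul_zero])
  have hdeg : 2 + P.natDegree ≤ p ^ (e - 1) * (1 + p ^ e) := by
    simpa [hP, natDegree_mul (pow_ne_zero 2 X_ne_zero) hP0] using
      natDegree_fgen_le (α := α) (e := e) h.one_lt (X : k[X]) X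
  have hroots : ({x : k | fgen p e α x x = 0} : Finset k) ⊆ insert 0 P.roots.toFinset := by
    intro x hx
    rw [mem_filter_univ, ← heval, mul_eq_zero, pow_eq_zero_iff two_ne_zero] at hx
    simpa [hP0] using hx
  have hcard := (Finset.card_le_card hroots).trans (Finset.card_insert_le _ _)
  have hroots_card := (Multiset.toFinset_card_le P.roots).trans P.card_roots'
  lia

end DiagonalForm

section EvenCharacteristic

variable {k : Type*} [Field k] [CharP k 2] {p e : ℕ} {α : ℕ → k} {h : IsCharPower p k}
  {ψ : AddChar k ℂ}

lemma exists_pow_eq_self_sq_eq [Finite k] {c : k} (hc : c ^ p = c) :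
    ∃ d : k, d ^ p = d ∧ d ^ 2 = c := by
  obtain ⟨d, rfl⟩ := isSquare_of_charTwo' c
  have hp : (d ^ p) ^ 2 = d ^ 2 := by rw [pow_right_comm, sq d, hc]
  exact ⟨d, (frobenius_inj k 2) (by simpa [frobenius_def] using hp), sq d⟩

variable [Fintype k] [DecidableEq k]

lemma sum_ker_apply_mul_mul_Rgen {c : k} (hc : c ^ p = c) (hc0 : c ≠ 0) (t : k) :
    ∑ v with Egen p e α v = 0, ψ (c * (t * v * Rgen p e α (t * v))) =
      ∑ v with Egen p e α v = 0, ψ (t * v * Rgen p e α (t * v)) := by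
  obtain ⟨d, hd, rfl⟩ := exists_pow_eq_self_sq_eq hc
  have hd0 : d ≠ 0 := ne_zero_pow two_ne_zero hc0
  refine Finset.sum_equiv (Equiv.mulLeft₀ d hd0) (fun v ↦ ?_) fun v _ ↦ ?_
  · simp [Egen_mul_left hd, hd0]
  · rw [Equiv.mulLeft₀_apply, mul_left_comm t, Rgen_mul_left hd]
    ring_nf

include h in
lemma IsInvariantChar.mul_card_ker_fgen_self_eq_zero {m : ℕ} (hcard : Nat.card k = p ^ m)
    (hψ : IsInvariantChar p ψ) {t : k}
    (htrace : ∀ v, Egen p e α v = 0 →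
      frobTrace p m (t * v * Rgen p e α (t * v)) = fgen p e α v v) :
    (p * #{v : k | Egen p e α v = 0 ∧ fgen p e α v v = 0} : ℂ) = #{v : k | Egen p e α v = 0} +
      (p - 1) * ∑ v with Egen p e α v = 0, ψ (t * v * Rgen p e α (t * v)) := by
  have := Fintype.ofFinite h.fixedField
  have hcardP : Fintype.card h.fixedField = p := by
    rw [← Nat.card_eq_fintype_card, h.natCard_fixedField hcard]
  calc (p * #{v : k | Egen p e α v = 0 ∧ fgen p e α v v = 0} : ℂ)
      = ∑ v with Egen p e α v = 0, if fgen p e α v v = 0 then (p : ℂ) else 0 := by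
        rw [← Finset.sum_filter, Finset.filter_filter, Finset.sum_const, nsmul_eq_mul, mul_comm]
    _ = ∑ v with Egen p e α v = 0,
          ∑ c : h.fixedField, ψ (c * (t * v * Rgen p e α (t * v))) :=
        Finset.sum_congr rfl fun v hv ↦ by
          rw [hψ.sum_fixedField_mul h hcard, htrace v (by simpa using hv)]
    _ = ∑ v with Egen p e α v = 0, ψ ((0 : h.fixedField) * (t * v * Rgen p e α (t * v))) +
          ∑ _c ∈ ({0}ᶜ : Finset h.fixedField),
            ∑ v with Egen p e α v = 0, ψ (t * v * Rgen p e α (t * v)) := by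
        rw [Finset.sum_comm, Fintype.sum_eq_add_sum_compl 0]
        exact congrArg _ (Finset.sum_congr rfl fun c hc ↦ sum_ker_apply_mul_mul_Rgen
          (h.coe_fixedField_pow c) (by simpa using hc) t)
    _ = _ := by
        simp [Finset.card_compl, hcardP, Nat.cast_sub h.one_lt.le]

include h in
lemma IsInvariantChar.sum_ker_ne_pow {m : ℕ} (hcard : Nat.card k = p ^ m)
    (hψ : IsInvariantChar p ψ) (he : e ≠ 0) (hcardV : #{v : k | Egen p e α v = 0} = p ^ (2 * e))
    {t y : k} (hy : fgen p e α y y ≠ 0) (htrace : ∀ v, Egen p e α v = 0 →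
      frobTrace p m (t * v * Rgen p e α (t * v)) = fgen p e α v v) :
    ∑ v with Egen p e α v = 0, ψ (t * v * Rgen p e α (t * v)) ≠ p ^ e := by
  intro hsum
  set Z := #{v : k | Egen p e α v = 0 ∧ fgen p e α v v = 0}
  have hcount : p * Z = p ^ (2 * e) + (p - 1) * p ^ e := by
    have hcount_cast := hψ.mul_card_ker_fgen_self_eq_zero (h := h) hcard htrace
    rw [hsum, hcardV, ← Nat.cast_pred h.one_lt.pos] at hcount_cast
    exact_mod_cast hcount_cast
  have hZ : Z < p ^ (e - 1) * (1 + p ^ e) :=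
    (Finset.card_le_card fun v ↦ by simp +contextual).trans_lt (card_fgen_self_eq_zero_lt h hy)
  have hdegree : p * (p ^ (e - 1) * (1 + p ^ e)) = p ^ e + p ^ (2 * e) := by
    rw [← mul_assoc, mul_pow_sub_one he]
    ring
  have hp : 1 * p ^ e ≤ (p - 1) * p ^ e := Nat.mul_le_mul_right _ (Nat.le_pred_of_lt h.one_lt)
  have := Nat.mul_lt_mul_of_pos_left hZ h.one_lt.pos
  lia

include h in
theorem IsInvariantChar.sum_apply_mul_Rgen_of_charTwo {M : ℕ} (hψ : IsInvariantChar p ψ)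
    (hM : M ≠ 0) (hα : ∀ i, α i ^ p ^ M = α i) (hα0 : α e ≠ 0) (he : e ≠ 0)
    (hcard : Nat.card k = p ^ (2 * (2 * M))) (hlt : p ^ (2 * e) < Nat.card k)
    (hcardV : #{v : k | Egen p e α v = 0} = p ^ (2 * e))
    (hV : ∀ v, Egen p e α v = 0 → v ^ p ^ M = v) :
    ∑ x, ψ (x * Rgen p e α x) = -(p ^ e * p ^ (2 * M)) := by
  obtain ⟨t, ht⟩ := exists_add_pow_eq_one (h.pow (mul_ne_zero two_ne_zero hM))
    (by rw [hcard, mul_comm, pow_mul])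
  have hcard' : Nat.card k = (p ^ (2 * M)) ^ 2 := by rw [hcard, mul_comm, pow_mul]
  have hfix {c : k} (hc : c ^ p ^ M = c) : c ^ p ^ (2 * M) = c := by
    rw [mul_comm, pow_mul, pow_pow_eq_self hc]
  have hψV (v : k) (hv : Egen p e α v = 0) : ψ (v * Rgen p e α v) = 1 :=
    hψ.apply_eq_one_of_pow_eq_self (h := h) (mul_ne_zero two_ne_zero hM) hcard'
      (hfix (mul_Rgen_pow_eq_self (h := h) hα (hV v hv)))
  have hsq : (∑ x, ψ (x * Rgen p e α x)) ^ 2 = ((p : ℂ) ^ e * p ^ (2 * M)) ^ 2 := by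
    rw [hψ.sum_apply_mul_Rgen_sq (h := h) hψV, hcardV, ← Nat.card_eq_fintype_card, hcard]
    push_cast
    ring
  refine (sq_eq_sq_iff_eq_or_eq_neg.mp hsq).resolve_left fun hpos ↦ ?_
  have hne (he' : e = 0) : (2 : k) ≠ 0 := absurd he' he
  obtain ⟨x, -, hx⟩ := exists_Egen_ne_zero h.one_lt hα0 hne (s := univ)
    (by rwa [card_univ, ← Nat.card_eq_fintype_card])
  obtain ⟨v, hv, hv0⟩ := Finset.exists_mem_ne
    (hcardV ▸ Nat.one_lt_pow (mul_ne_zero two_ne_zero he) h.one_lt) 0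
  obtain ⟨y, hy⟩ := exists_fgen_self_ne_zero h (by simpa using hv) hv0 hx
  refine hψ.sum_ker_ne_pow (h := h) hcard he hcardV hy
    (fun v hv ↦ frobTrace_mul_Rgen_eq_fgen_self h hα ht hv (hV v hv)) ?_
  rw [hψ.sum_apply_mul_Rgen_eq_sum_ker (h := h) (fun i ↦ hfix (hα i)) ht
    (mul_ne_zero two_ne_zero hM) hcard' fun v hv ↦ hfix (hV v hv), mul_comm] at hpos
  exact mul_right_cancel₀ (pow_ne_zero _ (Nat.cast_ne_zero.mpr h.ne_zero)) hpos

end EvenCharacteristic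

section Embedding

variable {k K : Type*} [Field k] [Field K] {p e : ℕ} {α : ℕ → k} {h : IsCharPower p K}

lemma mem_range_of_pow_natCard_eq_self [Finite k] (ι : k →+* K) {x : K} (hx : x ^ Nat.card k = x) :
    x ∈ Set.range ι := by
  refine (splits_X_pow_nat_card_sub_X (K := k)).mem_range_of_isRoot ?_ ?_
  · exact FiniteField.X_pow_card_sub_X_ne_zero k Finite.one_lt_card
  · simp [hx]

lemma natCard_comapFixedField (hk : IsCharPower p k) (ι : k →+* K) {W : Submodule h.fixedField K}
    (hW : ∀ w ∈ W, w ∈ Set.range ι) : Nat.card (comapFixedField hk ι W) = Nat.card W :=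
  Nat.card_eq_of_bijective (fun x ↦ (⟨ι x, x.2⟩ : W))
    ⟨fun x y hxy ↦ Subtype.ext (ι.injective (congrArg Subtype.val hxy)), fun w ↦ by
      obtain ⟨x, hx⟩ := hW w w.2
      exact ⟨⟨x, by simp [mem_comapFixedField, hx]⟩, Subtype.ext hx⟩⟩

lemma card_filter_Egen_eq_zero [IsAlgClosed K] [Fintype k] [DecidableEq k] (ι : k →+* K)
    (h : IsCharPower p K) (hα : α e ≠ 0) (hne : e = 0 → (2 : k) ≠ 0)
    (hV : ∀ v, Egen p e (fun i ↦ ι (α i)) v = 0 → v ∈ Set.range ι) :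
    #{v : k | Egen p e α v = 0} = p ^ (2 * e) := by
  have hαK : ι (α e) ≠ 0 := by simpa using hα
  have hneK (he : e = 0) : (2 : K) ≠ 0 := by
    simpa only [map_ofNat] using (map_ne_zero ι).mpr (hne he)
  rw [← card_ker_eLinear (α := fun i ↦ ι (α i)) h hαK hneK, ← Set.ncard_coe_finset,
    ← Set.ncard_image_of_injective _ ι.injective, ← Nat.card_coe_set_eq]
  congr! 2
  ext v
  simp only [coe_filter, mem_univ, true_and, mem_ker_eLinear]
  constructor
  · rintro ⟨x, hx, rfl⟩
    rw [← map_Egen, hx, map_zero]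
  · intro hv
    obtain ⟨x, rfl⟩ := hV v hv
    exact ⟨x, ι.injective (by rw [map_Egen, hv, map_zero]), rfl⟩

lemma IsLagrangian.le_of_forall_pow_eq_self [IsAlgClosed K] {β : ℕ → K}
    {W : Submodule h.fixedField K} (hW : IsLagrangian h e β W) (hβ : β e ≠ 0)
    (hne : e = 0 → (2 : K) ≠ 0) {s : ℕ} (hs : s ≠ 0) (hfix : ∀ w ∈ W, w ^ p ^ s = w) : e ≤ s := by
  have hcard := (h.pow hs).card_fixedField (IsAlgClosed.splits _)
  have : Finite (h.pow hs).fixedField :=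
    Nat.finite_of_card_ne_zero (by rw [hcard]; exact pow_ne_zero s h.ne_zero)
  rw [← Nat.pow_le_pow_iff_right h.one_lt, ← hW.natCard_eq hβ hne, ← hcard]
  exact Nat.card_le_card_of_injective
    (fun w : W ↦ (⟨w, (h.pow hs).mem_fixedField.mpr (hfix w w.2)⟩ : (h.pow hs).fixedField))
    fun v w hvw ↦ Subtype.ext (Subtype.mk.inj hvw)

end Embedding

section PointCount

variable {k K : Type*} [Field k] [Field K] [IsAlgClosed K] {p e s p₀ : ℕ} {α : ℕ → k}

lemma IsCharPower.odd_of_two_ne_zero {A : Type*} [CommRing A] (h : IsCharPower p A)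
    (h2 : (2 : A) ≠ 0) : Odd p := by
  obtain ⟨ℓ, n, hℓ, -, hchar, rfl⟩ := h
  refine (hℓ.odd_of_ne_two ?_).pow
  rintro rfl
  exact h2 (CharP.cast_eq_zero A 2)

variable [Fintype k] [CharP k p₀] (hk : IsCharPower p k) {h : IsCharPower p K} (ι : k →+* K)
  {W : Submodule h.fixedField K} (hW : IsLagrangian h e (fun i ↦ ι (α i)) W) (hα0 : α e ≠ 0)
  (hα : ∀ i, α i ^ p ^ s = α i) (hs : s ≠ 0) (hfix : ∀ w ∈ W, w ^ p ^ s = w)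
  (hcard : Nat.card k = (p ^ s) ^ (4 * p₀)) {ψ : AddChar k ℂ} (hψ : IsInvariantChar p ψ)
include hk hW hα0 hα hs hfix hcard hψ

lemma IsLagrangian.sum_apply_mul_Rgen_of_two_ne_zero (h2 : (2 : k) ≠ 0) :
    ∑ x, ψ (x * Rgen p e α x) = -(p ^ e * (p ^ s) ^ (2 * p₀)) := by
  have hαK : ι (α e) ≠ 0 := by simpa using hα0
  have h2K : (2 : K) ≠ 0 := by simpa only [map_ofNat] using (map_ne_zero ι).mpr h2
  have hes : e ≤ s := hW.le_of_forall_pow_eq_self hαK (fun _ ↦ h2K) hs hfix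
  have hexp : 4 * s ≤ s * (4 * p₀) := by
    have := (CharP.char_is_prime k p₀).pos
    nlinarith
  have hrange (w : K) (hw : w ∈ W) : w ∈ Set.range ι :=
    mem_range_of_pow_natCard_eq_self ι (by rw [hcard, pow_pow_eq_self (hfix w hw)])
  have hQ : (p ^ s) ^ (2 * p₀) % 4 = 1 := by
    have hodd := (hk.odd_of_two_ne_zero h2).pow (n := s)
    have hsq : (p ^ s) ^ 2 % 4 = 1 := by
      exact_mod_cast Int.sq_mod_four_eq_one_of_odd (hodd.natCast (R := ℤ))
    rw [pow_mul, Nat.pow_mod, hsq, one_pow]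
    rfl
  refine (hW.toIsIsotropic.comap hk ι).sum_apply_mul_Rgen_of_two_ne_zero ?_ hs
    (fun w hw ↦ ι.injective ?_) hα hα0 h2 (hcard.trans (by ring_nf)) ?_ hQ ?_ ?_ hψ
  · rw [natCard_comapFixedField hk ι hrange, hW.natCard_eq hαK fun _ ↦ h2K]
  · rw [map_pow, hfix _ hw]
  · push_cast
    rw [CharP.cast_eq_zero, mul_zero, mul_zero]
  · rw [hcard, ← pow_mul]
    exact Nat.pow_le_pow_right hk.one_lt.le (by lia)
  · rw [hcard, ← pow_mul]
    exact Nat.pow_lt_pow_right hk.one_lt (by lia)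

lemma IsLagrangian.sum_apply_mul_Rgen_of_charTwo (h2 : (2 : k) = 0) (he : e ≠ 0) :
    ∑ x, ψ (x * Rgen p e α x) = -(p ^ e * (p ^ s) ^ (2 * p₀)) := by
  classical
  have hαK : ι (α e) ≠ 0 := by simpa using hα0
  have h2K : ((2 : ℕ) : K) = 0 := by
    rw [Nat.cast_ofNat, ← map_ofNat ι, h2, map_zero]
  have : CharP k 2 := CharTwo.of_one_ne_zero_of_two_eq_zero one_ne_zero h2
  obtain rfl := CharP.eq k ‹CharP k p₀› this
  have hes : e ≤ s := hW.le_of_forall_pow_eq_self hαK (absurd · he) hs hfix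
  have hVfix (v : K) (hv : Egen p e (fun i ↦ ι (α i)) v = 0) : v ^ p ^ (s * 2) = v :=
    hW.pow_pow_mul_char_eq_self (fun i ↦ by rw [← map_pow, hα]) hfix hv h2K
  have hcard' : Nat.card k = p ^ (2 * (2 * (s * 2))) := by
    rw [hcard, ← pow_mul]
    ring_nf
  have hrange (v : K) (hv : Egen p e (fun i ↦ ι (α i)) v = 0) : v ∈ Set.range ι :=
    mem_range_of_pow_natCard_eq_self ι (by
      rw [hcard', mul_comm, mul_comm 2 (s * 2), mul_assoc, pow_mul, pow_pow_eq_self (hVfix v hv)])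
  rw [hψ.sum_apply_mul_Rgen_of_charTwo (h := hk) (mul_ne_zero hs two_ne_zero)
    (fun i ↦ by rw [pow_mul, pow_pow_eq_self (hα i)]) hα0 he hcard' ?_
    (card_filter_Egen_eq_zero ι h hα0 (absurd · he) hrange) fun v hv ↦ ι.injective ?_]
  · ring
  · rw [hcard']
    exact Nat.pow_lt_pow_right hk.one_lt (by lia)
  · rw [map_pow, hVfix (ι v) (by rw [← map_Egen, hv, map_zero])]

omit hψ in
theorem IsLagrangian.card_filter_pow_sub_self_eq_mul_Rgen [DecidableEq k]
    (hne : (p₀, e) ≠ (2, 0)) :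
    (#{z : k × k | z.2 ^ p - z.2 = z.1 * Rgen p e α z.1} : ℤ) =
      (p ^ s) ^ (4 * p₀) - (p - 1) * p ^ e * (p ^ s) ^ (2 * p₀) := by
  have hsum (ψ : AddChar k ℂ) (hψ : IsInvariantChar p ψ) :
      ∑ x, ψ (x * Rgen p e α x) = -(p ^ e * (p ^ s) ^ (2 * p₀)) := by
    by_cases h2 : (2 : k) = 0
    · have hp₀ : p₀ = 2 := CharP.eq k ‹_› (CharTwo.of_one_ne_zero_of_two_eq_zero one_ne_zero h2)
      exact hW.sum_apply_mul_Rgen_of_charTwo hk ι hα0 hα hs hfix hcard hψ h2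
        fun he ↦ hne (by rw [hp₀, he])
    · exact hW.sum_apply_mul_Rgen_of_two_ne_zero hk ι hα0 hα hs hfix hcard hψ h2
  have hcount := card_filter_pow_sub_self_eq_of_sum_eq hk
    (hcard.trans (pow_mul p s _).symm) (fun x ↦ x * Rgen p e α x) hsum
  rw [← Int.cast_inj (α := ℂ), Int.cast_natCast, hcount, pow_mul]
  push_cast
  ring

end PointCount

theorem statement17_general {F K F' : Type*} [Field F] [Fintype F] [Field K] [IsAlgClosed K]
    [Algebra F K] [Field F'] [Fintype F'] [DecidableEq F'] [Algebra F F'] {p₀ p s e : ℕ}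
    [CharP F p₀] (h : IsCharPower p F) (hcard : Fintype.card F = p ^ s) {a : ℕ → F}
    (hae : a e ≠ 0) (hne : (p₀, e) ≠ (2, 0)) {S : Set (K × K)}
    (hS : IsMaximalAbelianSubgroup p e (fun i ↦ algebraMap F K (a i)) S)
    (hSF : ∀ z ∈ S, ∃ x : F, algebraMap F K x = z.1)
    (hcard' : Fintype.card F' = (p ^ s) ^ (4 * p₀)) :
    (#{z : F' × F' | z.2 ^ p - z.2 = z.1 * Rgen p e (fun i ↦ algebraMap F F' (a i)) z.1} : ℤ) =
      (p ^ s) ^ (4 * p₀) - (p - 1) * p ^ e * (p ^ s) ^ (2 * p₀) := by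
  have hfixF (x : F) : x ^ p ^ s = x := by rw [← hcard, FiniteField.pow_card]
  have hs : s ≠ 0 := by
    rintro rfl
    exact Fintype.one_lt_card.ne' hcard
  have hF' : IsCharPower p F' := h.of_injective (algebraMap F F').injective
  have : CharP F' p₀ := charP_of_injective_algebraMap (algebraMap F F').injective p₀
  obtain ⟨W, hW, hWS⟩ := hS.exists_isLagrangian (h.of_injective (algebraMap F K).injective)
  have hfixW (w : K) (hw : w ∈ W) : w ^ p ^ s = w := by
    obtain ⟨b, hb⟩ := hWS w hw
    obtain ⟨x, rfl⟩ := hSF _ hb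
    rw [← map_pow, hfixF]
  let ι : F' →ₐ[F] K := IsAlgClosed.lift
  have hι (x : F) : ι (algebraMap F F' x) = algebraMap F K x := ι.commutes x
  simp only [← hι] at hW
  exact hW.card_filter_pow_sub_self_eq_mul_Rgen hF' (ι : F' →+* K) (by simpa using hae)
    (fun i ↦ by rw [← map_pow, hfixF]) hs hfixW (by rw [Nat.card_eq_fintype_card, hcard']) hne

/-- if some maximal abelian subgroup `A_R` of `H_R` is contained in
`F_q × F_q`, then `#{(x,y) ∈ F_{q^{4p₀}}² : y^p − y = x·R(x)} = q^{4p₀} − (p−1)p^e q^{2p₀}`,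
i.e. the Van der Geer–Van der Vlugt curve is `F_{q^{4p₀}}`-minimal (hence supersingular). -/
theorem statement17 {F K F' : Type*} [Field F] [Fintype F]
    [Field K] [IsAlgClosed K] [Algebra F K]
    [Field F'] [Fintype F'] [DecidableEq F'] [Algebra F F']
    (p₀ n p s q e f : ℕ) (hp₀ : p₀.Prime) [CharP F p₀] (hn : 0 < n) (hpn : p = p₀ ^ n)
    (hs : 0 < s) (hq : q = p ^ s) (hcard : Fintype.card F = q) (hf : q = p₀ ^ f)
    (a : ℕ → F) (hae : a e ≠ 0) (hne : (p₀, e) ≠ (2, 0))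
    -- `A_R = S` is a maximal abelian subgroup of `H_R` contained in `F_q × F_q`
    (S : Set (K × K))
    (hSsub : S ⊆ Hset p e (fun i => algebraMap F K (a i)))
    (hS0 : ((0 : K), (0 : K)) ∈ S)
    (hSmul : ∀ h ∈ S, ∀ h' ∈ S, Hmul p e (fun i => algebraMap F K (a i)) h h' ∈ S)
    (hSinv : ∀ h ∈ S, ∃ h' ∈ S, Hmul p e (fun i => algebraMap F K (a i)) h h' = (0, 0))
    (hScomm : ∀ h ∈ S, ∀ h' ∈ S, Hmul p e (fun i => algebraMap F K (a i)) h h' =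
      Hmul p e (fun i => algebraMap F K (a i)) h' h)
    (hSmax : ∀ T : Set (K × K), T ⊆ Hset p e (fun i => algebraMap F K (a i)) →
      ((0 : K), (0 : K)) ∈ T →
      (∀ h ∈ T, ∀ h' ∈ T, Hmul p e (fun i => algebraMap F K (a i)) h h' ∈ T) →
      (∀ h ∈ T, ∃ h' ∈ T, Hmul p e (fun i => algebraMap F K (a i)) h h' = (0, 0)) →
      (∀ h ∈ T, ∀ h' ∈ T, Hmul p e (fun i => algebraMap F K (a i)) h h' =
        Hmul p e (fun i => algebraMap F K (a i)) h' h) →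
      S ⊆ T → T = S)
    (hSF : ∀ h ∈ S, (∃ x : F, algebraMap F K x = h.1) ∧ (∃ y : F, algebraMap F K y = h.2))
    -- `F' = F_{q^{4p₀}}`
    (hcard' : Fintype.card F' = q ^ (4 * p₀)) :
    ((Finset.univ.filter fun z : F' × F' =>
        z.2 ^ p - z.2 = z.1 * Rgen p e (fun i => algebraMap F F' (a i)) z.1).card : ℤ) =
      (q : ℤ) ^ (4 * p₀) - ((p : ℤ) - 1) * (p : ℤ) ^ e * (q : ℤ) ^ (2 * p₀) := by
  subst hq
  exact_mod_cast statement17_general ⟨p₀, n, hp₀, hn.ne', ‹_›, hpn⟩ hcard hae hne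
    ⟨⟨hSsub, hS0, hSmul, hSinv, hScomm⟩,
      fun T hT ↦ hSmax T hT.subset hT.zero_mem hT.mul_mem hT.exists_inv hT.comm⟩
    (fun z hz ↦ (hSF z hz).1) hcard'
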